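/- arXiv:2101.12327 — 6 statements merged into one kernel-verified Lean document; each statement's English description precedes it below -/
import Mathlib

section
/- Let 𝓕 be a family of tournaments, let G be an 𝓕-extremal graph, and let u, v, w be distinct vertices of G such that {u,v} ∉ E(G), {u,w} ∉ E(G), and {v,w} ∈ E(G). Then the graph obtained from G by deleting the edge {v,w} is also 𝓕-extremal. Furthermore, setting H = G − {u,v,w}, the vectors u⃗_{H,𝓕}, v⃗_{H,𝓕}, and w⃗_{H,𝓕} are all equal. -/
open scoped Classical

noncomputable section

universe u

variable {V : Type u}

/-- An orientation of a simple graph `G`: a relation choosing exactly one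
direction for each edge of `G`. -/
abbrev SimpleGraph.Orient (G : SimpleGraph V) : Type u :=
  {D : V → V → Prop // (∀ u v, D u v → G.Adj u v) ∧ ∀ u v, G.Adj u v → (D u v ↔ ¬ D v u)}

/-- A family of tournaments: for each `k`, a set of orientations of the
complete graph on `k` vertices. -/
abbrev TournFamily : Type :=
  ∀ k : ℕ, Set ((⊤ : SimpleGraph (Fin k)).Orient)

/-- The orientation `D` of `G` contains a copy of the `k`-vertex tournament `T`. -/
def ContainsCopy {G : SimpleGraph V} (D : G.Orient) {k : ℕ}
    (T : (⊤ : SimpleGraph (Fin k)).Orient) : Prop :=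
  ∃ φ : Fin k → V, Function.Injective φ ∧ ∀ i j, T.1 i j → D.1 (φ i) (φ j)

/-- The orientation `D` is `F`-free: it contains no copy of a member of `F`. -/
def FreeOrient {G : SimpleGraph V} (F : TournFamily) (D : G.Orient) : Prop :=
  ∀ (k : ℕ) (T : (⊤ : SimpleGraph (Fin k)).Orient), T ∈ F k → ¬ ContainsCopy D T

/-- `D(G, F)`: the number of `F`-free orientations of the graph `G`. -/
def numOrient (G : SimpleGraph V) (F : TournFamily) : ℕ :=
  Nat.card {D : G.Orient // FreeOrient F D}

/-- `D(n, F)`: the maximum of `D(G, F)` over all `n`-vertex graphs `G`. -/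
def maxOrient (n : ℕ) (F : TournFamily) : ℕ :=
  sSup (Set.range fun G : SimpleGraph (Fin n) => numOrient G F)

/-- A tournament is strongly connected if there is a directed path between
every ordered pair of vertices. -/
def IsStrongTourn {k : ℕ} (T : (⊤ : SimpleGraph (Fin k)).Orient) : Prop :=
  ∀ u v : Fin k, Relation.ReflTransGen T.1 u v

/-- `𝓢 k`: the family of strongly connected tournaments on `k` vertices. -/
def SFam (k : ℕ) : TournFamily := fun m => {T | m = k ∧ IsStrongTourn T}

/-- `t r n`: the number of edges of the `r`-partite Turán graph on `n` vertices. -/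
def turanNum (r n : ℕ) : ℕ := (SimpleGraph.turanGraph n r).edgeFinset.card

/-- `c_F(G ∣ H⃗)`: the number of ways to orient the edges of `G` outside the induced
subgraph on `A` extending the orientation `H` to an `F`-free orientation of `G`. -/
def extFull (G : SimpleGraph V) (F : TournFamily) (A : Set V)
    (H : (G.induce A).Orient) : ℕ :=
  Nat.card {D : G.Orient // FreeOrient F D ∧
    ∀ (a b : V) (ha : a ∈ A) (hb : b ∈ A), (D.1 a b ↔ H.1 ⟨a, ha⟩ ⟨b, hb⟩)}

/-- `c_F(v, H⃗)`: the number of ways to orient the edges of `G` between `v` and `A`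
so that the resulting orientation of the induced subgraph on `A ∪ {v}`, extending the
orientation `H` of the induced subgraph on `A`, is `F`-free. -/
def extVert (G : SimpleGraph V) (F : TournFamily) (A : Set V) (v : V)
    (H : (G.induce A).Orient) : ℕ :=
  Nat.card {D : (G.induce (insert v A)).Orient // FreeOrient F D ∧
    ∀ (a b : V) (ha : a ∈ A) (hb : b ∈ A),
      (D.1 ⟨a, Set.mem_insert_of_mem v ha⟩ ⟨b, Set.mem_insert_of_mem v hb⟩ ↔
        H.1 ⟨a, ha⟩ ⟨b, hb⟩)}

/-- `G` is `F`-extremal: it has the maximum number of `F`-free orientations among all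
graphs on its (`n`-element) vertex set. -/
def IsExtremal {n : ℕ} (G : SimpleGraph (Fin n)) (F : TournFamily) : Prop :=
  ∀ G' : SimpleGraph (Fin n), numOrient G' F ≤ numOrient G F

/-- The relation `R` contains no copy of a member of `F`. -/
def FreeRel (F : TournFamily) (R : V → V → Prop) : Prop :=
  ∀ (k : ℕ) (T : (⊤ : SimpleGraph (Fin k)).Orient), T ∈ F k →
    ¬ ∃ φ : Fin k → V, Function.Injective φ ∧ ∀ i j, T.1 i j → R (φ i) (φ j)

/-- `R` is an orientation of the edges of `G` inside `B`. -/
def IsOrientOn (G : SimpleGraph V) (B : Set V) (R : V → V → Prop) : Prop :=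
  (∀ a b, R a b → G.Adj a b ∧ a ∈ B ∧ b ∈ B) ∧
    ∀ a b, a ∈ B → b ∈ B → G.Adj a b → (R a b ↔ ¬ R b a)

/-- The restriction of a relation to a set. -/
def restrictRel (R : V → V → Prop) (A : Set V) : V → V → Prop :=
  fun a b => R a b ∧ a ∈ A ∧ b ∈ A

lemma FreeRel.mono {F : TournFamily} {R S : V → V → Prop} (hS : FreeRel F S)
    (h : ∀ a b, R a b → S a b) : FreeRel F R := by
  rintro k T hT ⟨φ, hφ, hR⟩
  exact hS k T hT ⟨φ, hφ, fun i j hij => h _ _ (hR i j hij)⟩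

lemma IsOrientOn.restrict {G : SimpleGraph V} {A B : Set V} {S : V → V → Prop}
    (hS : IsOrientOn G B S) (hAB : A ⊆ B) : IsOrientOn G A (restrictRel S A) := by
  refine ⟨fun a b h => ⟨(hS.1 a b h.1).1, h.2⟩, fun a b ha hb hab => ?_⟩
  simpa [restrictRel, ha, hb] using hS.2 a b (hAB ha) (hAB hb) hab

lemma FreeRel.restrict {F : TournFamily} {S : V → V → Prop} (hS : FreeRel F S) (A : Set V) :
    FreeRel F (restrictRel S A) :=
  hS.mono fun _ _ h => h.1

/-- An orientation is free if its restrictions to the complements of two nonadjacent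
vertices are free. -/
lemma FreeRel.of_restrict {F : TournFamily} {S : V → V → Prop} {x y : V} (hxy : x ≠ y)
    (h1 : ¬ S x y) (h2 : ¬ S y x) (hx : FreeRel F (restrictRel S {x}ᶜ))
    (hy : FreeRel F (restrictRel S {y}ᶜ)) : FreeRel F S := by
  rintro k T hT ⟨φ, hφ, hS⟩
  by_cases hx' : ∃ i, φ i = x
  · by_cases hy' : ∃ j, φ j = y
    · obtain ⟨i, rfl⟩ := hx'
      obtain ⟨j, rfl⟩ := hy'
      have hij : i ≠ j := fun h => hxy (congrArg φ h)
      have hT' := T.2.2 i j hij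
      by_cases hTji : T.1 j i
      · exact h2 (hS _ _ hTji)
      · exact h1 (hS _ _ (hT'.2 hTji))
    · push Not at hy'
      exact hy k T hT ⟨φ, hφ, fun i j hij => ⟨hS i j hij, hy' i, hy' j⟩⟩
  · push Not at hx'
    exact hx k T hT ⟨φ, hφ, fun i j hij => ⟨hS i j hij, hx' i, hx' j⟩⟩

/-- Extend a relation on a subset by the empty relation. -/
def liftRel {B : Set V} (D : B → B → Prop) : V → V → Prop :=
  fun a b => ∃ (ha : a ∈ B) (hb : b ∈ B), D ⟨a, ha⟩ ⟨b, hb⟩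

lemma freeRel_liftRel {G : SimpleGraph V} {F : TournFamily} {B : Set V} {x : V} (hx : x ∈ B)
    (D : (G.induce B).Orient) : FreeRel F (liftRel D.1) ↔ FreeOrient F D := by
  refine forall_congr' fun k => forall_congr' fun T => imp_congr_right fun _ => not_congr ?_
  constructor
  · rintro ⟨φ, hφ, h⟩
    by_cases hB : ∀ i, φ i ∈ B
    · exact ⟨fun i => ⟨φ i, hB i⟩, fun i j hij => hφ (congrArg Subtype.val hij),
        fun i j hij => (h i j hij).2.2⟩
    · push Not at hB
      obtain ⟨i, hi⟩ := hB
      have hall : ∀ j, j = i := by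
        intro j
        by_contra hji
        have hT := T.2.2 j i hji
        by_cases hij : T.1 i j
        · exact hi (h _ _ hij).1
        · exact hi (h _ _ (hT.2 hij)).2.1
      refine ⟨fun _ => ⟨x, hx⟩, fun a b _ => (hall a).trans (hall b).symm, fun a b hab => ?_⟩
      exact absurd ((hall a).trans (hall b).symm) (T.2.1 a b hab)
  · rintro ⟨φ, hφ, h⟩
    exact ⟨fun i => φ i, Subtype.val_injective.comp hφ,
      fun i j hij => ⟨(φ i).2, (φ j).2, h i j hij⟩⟩

lemma isOrientOn_liftRel {G : SimpleGraph V} {B : Set V} (D : (G.induce B).Orient) :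
    IsOrientOn G B (liftRel D.1) := by
  refine ⟨fun a b h => ⟨D.2.1 _ _ h.2.2, h.1, h.2.1⟩, fun a b ha hb hab => ?_⟩
  simpa [liftRel, ha, hb] using D.2.2 ⟨a, ha⟩ ⟨b, hb⟩ hab

lemma liftRel_coe {G : SimpleGraph V} {B : Set V} {S : V → V → Prop} (hS : IsOrientOn G B S) :
    liftRel (fun a b : B => S a b) = S := by
  funext a b
  exact propext ⟨fun h => h.2.2, fun h => ⟨(hS.1 a b h).2.1, (hS.1 a b h).2.2, h⟩⟩

section Finite

variable [Fintype V]

/-- The `F`-free orientations of the part of `G` inside `B`. -/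
def freeOrients (G : SimpleGraph V) (F : TournFamily) (B : Set V) : Finset (V → V → Prop) :=
  Finset.univ.filter fun S => IsOrientOn G B S ∧ FreeRel F S

/-- The free orientations on `insert x A` that restrict to `R` on `A`. -/
def extensions (G : SimpleGraph V) (F : TournFamily) (A : Set V) (x : V) (R : V → V → Prop) :
    Finset (V → V → Prop) :=
  (freeOrients G F (insert x A)).filter fun S => restrictRel S A = R

lemma mem_freeOrients {G : SimpleGraph V} {F : TournFamily} {B : Set V} {S : V → V → Prop} :
    S ∈ freeOrients G F B ↔ IsOrientOn G B S ∧ FreeRel F S := by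
  simp [freeOrients]

lemma mem_extensions {G : SimpleGraph V} {F : TournFamily} {A : Set V} {x : V}
    {R S : V → V → Prop} :
    S ∈ extensions G F A x R ↔
      (IsOrientOn G (insert x A) S ∧ FreeRel F S) ∧ restrictRel S A = R := by
  simp [extensions, mem_freeOrients]

lemma mem_freeOrients_of_mem_extensions {G : SimpleGraph V} {F : TournFamily} {A : Set V} {x : V}
    {R S : V → V → Prop} (h : S ∈ extensions G F A x R) : R ∈ freeOrients G F A := by
  obtain ⟨⟨h1, h2⟩, rfl⟩ := mem_extensions.1 h
  exact mem_freeOrients.2 ⟨h1.restrict (Set.subset_insert x A), h2.restrict A⟩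

lemma card_extensions_eq_zero {G : SimpleGraph V} {F : TournFamily} {A : Set V} {x : V}
    {R : V → V → Prop} (h : R ∉ freeOrients G F A) : (extensions G F A x R).card = 0 := by
  rw [Finset.card_eq_zero, Finset.eq_empty_iff_forall_notMem]
  exact fun S hS => h (mem_freeOrients_of_mem_extensions hS)

lemma numOrient_eq_card (G : SimpleGraph V) (F : TournFamily) :
    numOrient G F = (freeOrients G F Set.univ).card := by
  rw [numOrient, ← Fintype.card_coe, ← Nat.card_eq_fintype_card]
  refine Nat.card_congr
    { toFun := fun D => ⟨D.1.1, mem_freeOrients.2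
        ⟨⟨fun a b h => ⟨D.1.2.1 a b h, trivial, trivial⟩, fun a b _ _ => D.1.2.2 a b⟩, D.2⟩⟩
      invFun := fun S => ⟨⟨S.1, fun a b h => ((mem_freeOrients.1 S.2).1.1 a b h).1,
        fun a b => (mem_freeOrients.1 S.2).1.2 a b trivial trivial⟩, (mem_freeOrients.1 S.2).2⟩
      left_inv := fun _ => rfl
      right_inv := fun _ => rfl }

lemma extVert_eq_card (G : SimpleGraph V) (F : TournFamily) (A : Set V) (x : V)
    (H : (G.induce A).Orient) :
    extVert G F A x H = (extensions G F A x (liftRel H.1)).card := by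
  rw [extVert, ← Fintype.card_coe, ← Nat.card_eq_fintype_card]
  have hx : x ∈ insert x A := Set.mem_insert x A
  refine Nat.card_congr
    { toFun := fun D => ⟨liftRel D.1.1, mem_extensions.2
        ⟨⟨isOrientOn_liftRel D.1, (freeRel_liftRel hx D.1).2 D.2.1⟩, ?_⟩⟩
      invFun := fun S => ⟨⟨fun a b => S.1 a b,
        fun a b h => ((mem_extensions.1 S.2).1.1.1 a b h).1,
        fun a b => (mem_extensions.1 S.2).1.1.2 a b a.2 b.2⟩, ?_, ?_⟩
      left_inv := ?_
      right_inv := ?_ }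
  · funext a b
    refine propext ⟨fun ⟨h, ha, hb⟩ => ⟨ha, hb, (D.2.2 a b ha hb).1 h.2.2⟩, fun ⟨ha, hb, h⟩ => ?_⟩
    exact ⟨⟨Set.mem_insert_of_mem x ha, Set.mem_insert_of_mem x hb, (D.2.2 a b ha hb).2 h⟩, ha, hb⟩
  · rw [← freeRel_liftRel hx, liftRel_coe (mem_extensions.1 S.2).1.1]
    exact (mem_extensions.1 S.2).1.2
  · intro a b ha hb
    have h := congrFun (congrFun (mem_extensions.1 S.2).2 a) b
    simpa [restrictRel, liftRel, ha, hb] using h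
  · intro D
    ext a b
    exact ⟨fun h => h.2.2, fun h => ⟨a.2, b.2, h⟩⟩
  · intro S
    exact Subtype.ext (liftRel_coe (mem_extensions.1 S.2).1.1)

/-- Extension counts agree at vertices with the same neighbourhood in `A`. -/
lemma card_extensions_congr {G G' : SimpleGraph V} (F : TournFamily) {A : Set V} {x y : V}
    (hx : x ∉ A) (hy : y ∉ A) (hA : ∀ a ∈ A, ∀ b ∈ A, (G.Adj a b ↔ G'.Adj a b))
    (hxy : ∀ a ∈ A, (G.Adj x a ↔ G'.Adj y a)) (R : V → V → Prop) :
    (extensions G F A x R).card = (extensions G' F A y R).card := by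
  have key : ∀ {G G' : SimpleGraph V} {x y : V}, x ∉ A → y ∉ A →
      (∀ a ∈ A, ∀ b ∈ A, (G.Adj a b ↔ G'.Adj a b)) → (∀ a ∈ A, (G.Adj x a ↔ G'.Adj y a)) →
      (extensions G F A x R).card ≤ (extensions G' F A y R).card := by
    intro G G' x y hx hy hA hxy
    let σ := Equiv.swap x y
    have hσA : ∀ a ∈ A, σ a = a := fun a ha =>
      Equiv.swap_apply_of_ne_of_ne (fun h => hx (h ▸ ha)) (fun h => hy (h ▸ ha))
    have hσy : σ y = x := Equiv.swap_apply_right x y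
    have hmem : ∀ a, σ a ∈ insert x A ↔ a ∈ insert y A := by
      intro a
      constructor
      · rintro (h | h)
        · exact Or.inl (σ.injective (h.trans hσy.symm))
        · have : σ (σ a) = a := Equiv.swap_apply_self x y a
          rw [hσA _ h] at this
          exact Or.inr (this ▸ h)
      · rintro (rfl | h)
        · exact Or.inl hσy
        · exact Or.inr ((hσA a h).symm ▸ h)
    have hadj : ∀ a ∈ insert y A, ∀ b ∈ insert y A, (G.Adj (σ a) (σ b) ↔ G'.Adj a b) := by
      rintro a (rfl | ha) b (rfl | hb)
      · simp
      · rw [hσy, hσA b hb]; exact hxy b hb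
      · rw [hσy, hσA a ha, G.adj_comm, G'.adj_comm]; exact hxy a ha
      · rw [hσA a ha, hσA b hb]; exact hA a ha b hb
    refine Finset.card_le_card_of_injOn (fun S a b => S (σ a) (σ b)) ?_ ?_
    · intro S hS
      obtain ⟨⟨⟨h1, h2⟩, h3⟩, rfl⟩ := mem_extensions.1 hS
      refine mem_extensions.2 ⟨⟨⟨fun a b h => ?_, fun a b ha hb hab => ?_⟩, ?_⟩, ?_⟩
      · obtain ⟨h, ha, hb⟩ := h1 _ _ h
        rw [hmem] at ha hb
        exact ⟨(hadj a ha b hb).1 h, ha, hb⟩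
      · exact h2 _ _ ((hmem a).2 ha) ((hmem b).2 hb) ((hadj a ha b hb).2 hab)
      · rintro k T hT ⟨φ, hφ, h⟩
        exact h3 k T hT ⟨σ ∘ φ, σ.injective.comp hφ, h⟩
      · funext a b
        refine propext (and_congr_left fun h => ?_)
        simp only [hσA a h.1, hσA b h.2]
    · intro S _ S' _ h
      funext a b
      simpa using congrFun (congrFun h (σ.symm a)) (σ.symm b)
  exact le_antisymm (key hx hy hA hxy) (key hy hx (fun a ha b hb => (hA a ha b hb).symm)
    fun a ha => (hxy a ha).symm)

/-- Adding a nonadjacent vertex `y` to `A` does not affect extension counts at `x`. -/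
lemma card_extensions_insert {G : SimpleGraph V} {F : TournFamily} {A : Set V} {x y : V}
    (hx : x ∉ A) (hy : y ∉ A) (hne : x ≠ y) (hxy : ¬ G.Adj x y) {S : V → V → Prop}
    (hS : S ∈ freeOrients G F (insert y A)) :
    (extensions G F (insert y A) x S).card = (extensions G F A x (restrictRel S A)).card := by
  obtain ⟨hS1, hS2⟩ := mem_freeOrients.1 hS
  have hyx : ¬ G.Adj y x := fun h => hxy h.symm
  refine Finset.card_bij' (fun S' _ => restrictRel S' (insert x A))
    (fun S₁ _ a b => S₁ a b ∨ S a b) ?_ ?_ ?_ ?_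
  · intro S' hS'
    obtain ⟨⟨h1, h2⟩, rfl⟩ := mem_extensions.1 hS'
    refine mem_extensions.2 ⟨⟨h1.restrict (Set.insert_subset_insert (Set.subset_insert y A)),
      h2.restrict _⟩, ?_⟩
    funext a b
    simp only [restrictRel, Set.mem_insert_iff, eq_iff_iff]
    tauto
  · intro S₁ hS₁
    obtain ⟨⟨h1, h2⟩, h3⟩ := mem_extensions.1 hS₁
    have hag : ∀ a b, a ∈ A → b ∈ A → (S₁ a b ↔ S a b) := fun a b ha hb => by
      simpa [restrictRel, ha, hb] using congrFun (congrFun h3 a) b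
    have hr1 : ∀ a b, a ≠ y → b ≠ y → S a b → S₁ a b := fun a b ha hb h => by
      have := hS1.1 a b h
      exact (hag a b (this.2.1.resolve_left ha) (this.2.2.resolve_left hb)).2 h
    have hr2 : ∀ a b, a ≠ x → b ≠ x → S₁ a b → S a b := fun a b ha hb h => by
      have := h1.1 a b h
      exact (hag a b (this.2.1.resolve_left ha) (this.2.2.resolve_left hb)).1 h
    refine mem_extensions.2 ⟨⟨⟨?_, ?_⟩, ?_⟩, ?_⟩
    · rintro a b (h | h)
      · have := h1.1 a b h
        simp only [Set.mem_insert_iff] at this ⊢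
        tauto
      · have := hS1.1 a b h
        simp only [Set.mem_insert_iff] at this ⊢
        tauto
    · intro a b ha hb hab
      have hab' : (a ≠ y ∧ b ≠ y) ∨ (a ≠ x ∧ b ≠ x) := by
        by_contra hcon
        by_cases hay : a = y
        · by_cases hbx : b = x
          · exact hyx (hay ▸ hbx ▸ hab)
          · exact hcon (Or.inr ⟨fun h => hne (h.symm.trans hay), hbx⟩)
        · by_cases hby : b = y
          · by_cases hax : a = x
            · exact hxy (hax ▸ hby ▸ hab)
            · exact hcon (Or.inr ⟨hax, fun h => hne (h.symm.trans hby)⟩)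
          · exact hcon (Or.inl ⟨hay, hby⟩)
      rcases hab' with ⟨hay, hby⟩ | ⟨hax, hbx⟩
      · have ha' : a ∈ insert x A := ha.imp_right fun h => h.resolve_left hay
        have hb' : b ∈ insert x A := hb.imp_right fun h => h.resolve_left hby
        have := h1.2 a b ha' hb' hab
        have := hr1 a b hay hby
        have := hr1 b a hby hay
        tauto
      · have := hS1.2 a b (ha.resolve_left hax) (hb.resolve_left hbx) hab
        have := hr2 a b hax hbx
        have := hr2 b a hbx hax
        tauto
    · refine FreeRel.of_restrict hne ?_ ?_ (hS2.mono ?_) (h2.mono ?_)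
      · rintro (h | h)
        exacts [hxy (h1.1 _ _ h).1, hxy (hS1.1 _ _ h).1]
      · rintro (h | h)
        exacts [hyx (h1.1 _ _ h).1, hyx (hS1.1 _ _ h).1]
      · rintro a b ⟨h | h, ha, hb⟩
        exacts [hr2 a b ha hb h, h]
      · rintro a b ⟨h | h, ha, hb⟩
        exacts [h, hr1 a b ha hb h]
    · funext a b
      refine propext ⟨?_, fun h => ⟨Or.inr h, (hS1.1 a b h).2⟩⟩
      rintro ⟨h | h, ha, hb⟩
      · have hax : a ≠ x := by rintro rfl; exact ha.elim hne hx
        have hbx : b ≠ x := by rintro rfl; exact hb.elim hne hx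
        exact hr2 a b hax hbx h
      · exact h
  · intro S' hS'
    obtain ⟨⟨h1, h2⟩, rfl⟩ := mem_extensions.1 hS'
    funext a b
    refine propext ⟨fun h => h.elim And.left And.left, fun h => ?_⟩
    have := h1.1 a b h
    by_cases hab : (a = x ∧ b = y) ∨ (a = y ∧ b = x)
    · rcases hab with ⟨rfl, rfl⟩ | ⟨rfl, rfl⟩
      exacts [absurd this.1 hxy, absurd this.1 hyx]
    · have hne' := this.1.ne
      simp only [restrictRel, Set.mem_insert_iff] at this ⊢
      grind
  · intro S₁ hS₁
    obtain ⟨⟨h1, h2⟩, h3⟩ := mem_extensions.1 hS₁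
    funext a b
    refine propext ⟨?_, fun h => ⟨Or.inl h, (h1.1 a b h).2⟩⟩
    rintro ⟨h | h, ha, hb⟩
    · exact h
    · have hab := hS1.1 a b h
      have haA : a ∈ A := by
        rcases ha with rfl | ha
        exacts [(hab.2.1.elim hne hx).elim, ha]
      have hbA : b ∈ A := by
        rcases hb with rfl | hb
        exacts [(hab.2.2.elim hne hx).elim, hb]
      have := congrFun (congrFun h3 a) b
      simp only [restrictRel, haA, hbA, and_self, and_true, eq_iff_iff] at this
      exact this.2 h

/-- Orientations are counted by extending independently at two nonadjacent vertices. -/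
lemma numOrient_eq_sum [DecidableEq V] {G : SimpleGraph V} (F : TournFamily) {A : Set V} {x y : V}
    (hne : x ≠ y) (hA : ∀ a, a ∈ A ↔ a ≠ x ∧ a ≠ y) (hxy : ¬ G.Adj x y) :
    numOrient G F =
      ∑ R, (extensions G F A x R).card * (extensions G F A y R).card := by
  have hx : x ∉ A := fun h => ((hA x).1 h).1 rfl
  have hy : y ∉ A := fun h => ((hA y).1 h).2 rfl
  have huniv : (Set.univ : Set V) = insert x (insert y A) := by
    ext a
    simp only [Set.mem_univ, Set.mem_insert_iff, hA, true_iff]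
    tauto
  have hfib : ∀ R, extensions G F A y R =
      (freeOrients G F (insert y A)).filter fun S => restrictRel S A = R := fun _ => rfl
  rw [numOrient_eq_card, huniv, Finset.card_eq_sum_card_fiberwise
    (f := fun S => restrictRel S (insert y A)) (t := freeOrients G F (insert y A))]
  · rw [← Finset.sum_fiberwise (freeOrients G F (insert y A)) fun S => restrictRel S A]
    refine Finset.sum_congr rfl fun R _ => ?_
    rw [← hfib, mul_comm, ← smul_eq_mul, ← Finset.sum_const]
    refine Finset.sum_congr rfl fun S hS => ?_
    obtain ⟨h1, rfl⟩ := mem_extensions.1 hS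
    exact card_extensions_insert hx hy hne hxy (mem_freeOrients.2 h1)
  · intro S hS
    obtain ⟨h1, h2⟩ := mem_freeOrients.1 hS
    exact mem_freeOrients.2 ⟨h1.restrict (Set.subset_insert _ _), h2.restrict _⟩

/-- Replacing `y` by a nonadjacent clone of `x` gives the sum of the squared extension counts at `x`. -/
lemma numOrient_replaceVertex [DecidableEq V] {G : SimpleGraph V} (F : TournFamily) {A : Set V} {x y : V}
    (hne : x ≠ y) (hA : ∀ a, a ∈ A ↔ a ≠ x ∧ a ≠ y) :
    numOrient (G.replaceVertex x y) F =
      ∑ R, (extensions G F A x R).card * (extensions G F A x R).card := by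
  have hx : x ∉ A := fun h => ((hA x).1 h).1 rfl
  have hy : y ∉ A := fun h => ((hA y).1 h).2 rfl
  rw [numOrient_eq_sum F hne hA (G.not_adj_replaceVertex_same x y)]
  refine Finset.sum_congr rfl fun R _ => ?_
  have hAA : ∀ a ∈ A, ∀ b ∈ A, ((G.replaceVertex x y).Adj a b ↔ G.Adj a b) := fun a ha b hb =>
    G.adj_replaceVertex_iff_of_ne x ((hA a).1 ha).2 ((hA b).1 hb).2
  rw [card_extensions_congr F hx hx hAA, card_extensions_congr F hy hx hAA]
  · intro a ha
    simp [SimpleGraph.replaceVertex, ((hA a).1 ha).2]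
  · intro a ha
    exact G.adj_replaceVertex_iff_of_ne x hne ((hA a).1 ha).2

end Finite

variable {n : ℕ} {G : SimpleGraph (Fin n)} {F : TournFamily}

lemma IsExtremal.of_eq {G' : SimpleGraph (Fin n)} (hG : IsExtremal G F)
    (h : numOrient G' F = numOrient G F) : IsExtremal G' F :=
  fun K => h ▸ hG K

/-- In an extremal graph, nonadjacent vertices have equal extension counts. -/
lemma IsExtremal.card_extensions_eq (hG : IsExtremal G F) {A : Set (Fin n)} {x y : Fin n}
    (hne : x ≠ y) (hA : ∀ a, a ∈ A ↔ a ≠ x ∧ a ≠ y) (hxy : ¬ G.Adj x y)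
    (R : Fin n → Fin n → Prop) :
    (extensions G F A x R).card = (extensions G F A y R).card := by
  have hA' : ∀ a, a ∈ A ↔ a ≠ y ∧ a ≠ x := fun a => (hA a).trans and_comm
  have h1 := hG (G.replaceVertex x y)
  have h2 := hG (G.replaceVertex y x)
  rw [numOrient_replaceVertex F hne hA, numOrient_eq_sum F hne hA hxy] at h1
  rw [numOrient_replaceVertex F hne.symm hA', numOrient_eq_sum F hne hA hxy] at h2
  set f : (Fin n → Fin n → Prop) → ℕ := fun R => (extensions G F A x R).card
  set g : (Fin n → Fin n → Prop) → ℕ := fun R => (extensions G F A y R).card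
  change f R = g R
  have h1' : (∑ R, (f R : ℤ) * f R) ≤ ∑ R, (f R : ℤ) * g R := by exact_mod_cast h1
  have h2' : (∑ R, (g R : ℤ) * g R) ≤ ∑ R, (f R : ℤ) * g R := by exact_mod_cast h2
  have hsum : ∑ R, ((f R : ℤ) - g R) ^ 2 ≤ 0 := by
    have : ∑ R, ((f R : ℤ) - g R) ^ 2 =
        ∑ R, (f R : ℤ) * f R + ∑ R, (g R : ℤ) * g R - 2 * ∑ R, (f R : ℤ) * g R := by
      rw [Finset.mul_sum, ← Finset.sum_add_distrib, ← Finset.sum_sub_distrib]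
      exact Finset.sum_congr rfl fun R _ => by ring
    linarith
  have h0 := (Finset.sum_eq_zero_iff_of_nonneg fun R _ => sq_nonneg ((f R : ℤ) - g R)).1
    (le_antisymm hsum (Finset.sum_nonneg fun R _ => sq_nonneg _)) R (Finset.mem_univ R)
  have h0' := pow_eq_zero_iff (two_ne_zero) |>.1 h0
  omega

lemma IsExtremal.replaceVertex (hG : IsExtremal G F) {x y : Fin n} (hne : x ≠ y)
    (hxy : ¬ G.Adj x y) : IsExtremal (G.replaceVertex x y) F := by
  have hA : ∀ a, a ∈ ({a | a ≠ x ∧ a ≠ y} : Set (Fin n)) ↔ a ≠ x ∧ a ≠ y := fun _ => Iff.rfl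
  refine hG.of_eq ?_
  rw [numOrient_replaceVertex F hne hA, numOrient_eq_sum F hne hA hxy]
  exact Finset.sum_congr rfl fun R _ => by rw [hG.card_extensions_eq hne hA hxy]

/-- For independent `x, y, z` in an extremal graph, the counts at `y` and `z` agree wherever
the count at `x` is nonzero. -/
lemma IsExtremal.card_extensions_eq_of_ne_zero (hG : IsExtremal G F) {A : Set (Fin n)}
    {x y z : Fin n} (hxy : x ≠ y) (hxz : x ≠ z) (hyz : y ≠ z)
    (hA : ∀ a, a ∈ A ↔ a ≠ x ∧ a ≠ y ∧ a ≠ z)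
    (axy : ¬ G.Adj x y) (axz : ¬ G.Adj x z) (ayz : ¬ G.Adj y z)
    {R : Fin n → Fin n → Prop} (hR : (extensions G F A x R).card ≠ 0) :
    (extensions G F A y R).card = (extensions G F A z R).card := by
  obtain ⟨S, hS⟩ := Finset.card_ne_zero.1 hR
  obtain ⟨h1, rfl⟩ := mem_extensions.1 hS
  have hx : x ∉ A := fun h => ((hA x).1 h).1 rfl
  have hy : y ∉ A := fun h => ((hA y).1 h).2.1 rfl
  have hz : z ∉ A := fun h => ((hA z).1 h).2.2 rfl
  have hS' := mem_freeOrients.2 h1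
  have hins : ∀ a, a ∈ insert x A ↔ a ≠ y ∧ a ≠ z := by
    intro a
    simp only [Set.mem_insert_iff, hA]
    grind
  rw [← card_extensions_insert hy hx hxy.symm (fun h => axy h.symm) hS',
    ← card_extensions_insert hz hx hxz.symm (fun h => axz h.symm) hS']
  exact hG.card_extensions_eq hyz hins ayz S

/-- In an extremal graph, if `u` is nonadjacent to `v` and `w`, then `u` and `w` have the same
extension counts over the complement of `{u, v, w}`. -/
lemma IsExtremal.card_extensions_eq_of_not_adj (hG : IsExtremal G F) {A : Set (Fin n)}
    {u v w : Fin n} (huv : u ≠ v) (huw : u ≠ w) (hvw : v ≠ w)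
    (hA : ∀ a, a ∈ A ↔ a ≠ u ∧ a ≠ v ∧ a ≠ w)
    (h1 : ¬ G.Adj u v) (h2 : ¬ G.Adj u w) (R : Fin n → Fin n → Prop) :
    (extensions G F A u R).card = (extensions G F A w R).card := by
  have hu : u ∉ A := fun h => ((hA u).1 h).1 rfl
  have hv : v ∉ A := fun h => ((hA v).1 h).2.1 rfl
  have hw : w ∉ A := fun h => ((hA w).1 h).2.2 rfl
  set K := G.replaceVertex u v with hK
  have adjK : ∀ a b, K.Adj a b ↔
      if a = v then (if b = v then False else G.Adj u b)
      else (if b = v then G.Adj a u else G.Adj a b) := by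
    intro a b
    simp only [hK, SimpleGraph.replaceVertex]
  have hKex : IsExtremal K F := hG.replaceVertex huv h1
  have Kuv : ¬ K.Adj u v := by simp [adjK, huv]
  have Kuw : ¬ K.Adj u w := by simp [adjK, huv, hvw.symm, h2]
  have Kvw : ¬ K.Adj v w := by simp [adjK, hvw.symm, h2]
  have hKA : ∀ a ∈ A, ∀ b ∈ A, (K.Adj a b ↔ G.Adj a b) := by
    intro a ha b hb
    simp [adjK, ((hA a).1 ha).2.1, ((hA b).1 hb).2.1]
  have Ku : (extensions K F A u R).card = (extensions G F A u R).card :=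
    card_extensions_congr F hu hu hKA (fun a ha => by simp [adjK, huv, ((hA a).1 ha).2.1]) R
  have Kv : (extensions K F A v R).card = (extensions G F A u R).card :=
    card_extensions_congr F hv hu hKA (fun a ha => by simp [adjK, ((hA a).1 ha).2.1]) R
  have Kw : (extensions K F A w R).card = (extensions G F A w R).card :=
    card_extensions_congr F hw hw hKA
      (fun a ha => by simp [adjK, hvw.symm, ((hA a).1 ha).2.1]) R
  by_cases h0 : (extensions G F A u R).card = 0
  · by_contra hcon
    set L := K.replaceVertex w u with hL
    have adjL : ∀ a b, L.Adj a b ↔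
        if a = u then (if b = u then False else K.Adj w b)
        else (if b = u then K.Adj a w else K.Adj a b) := by
      intro a b
      simp only [hL, SimpleGraph.replaceVertex]
    have hLex : IsExtremal L F := hKex.replaceVertex huw.symm fun h => Kuw h.symm
    have Kwv : ¬ K.Adj w v := fun h => Kvw h.symm
    have hLA : ∀ a ∈ A, ∀ b ∈ A, (L.Adj a b ↔ K.Adj a b) := by
      intro a ha b hb
      simp [adjL, ((hA a).1 ha).1, ((hA b).1 hb).1]
    have Lu : (extensions L F A u R).card = (extensions K F A w R).card :=
      card_extensions_congr F hu hw hLA (fun a ha => by simp [adjL, ((hA a).1 ha).1]) R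
    have Lv : (extensions L F A v R).card = (extensions K F A v R).card :=
      card_extensions_congr F hv hv hLA
        (fun a ha => by simp [adjL, huv.symm, ((hA a).1 ha).1]) R
    have Lw : (extensions L F A w R).card = (extensions K F A w R).card :=
      card_extensions_congr F hw hw hLA
        (fun a ha => by simp [adjL, huw.symm, ((hA a).1 ha).1]) R
    have := hLex.card_extensions_eq_of_ne_zero (R := R) huv huw hvw hA
      (by simp [adjL, huv.symm, Kwv]) (by simp [adjL, huw.symm])
      (by simp [adjL, huv.symm, huw.symm, Kvw]) (by omega)
    omega
  · have := hKex.card_extensions_eq_of_ne_zero (R := R) huv.symm hvw huw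
      (fun a => (hA a).trans and_left_comm) (fun h => Kuv h.symm) Kvw Kuw (by omega)
    omega

/-- If `G` is `F`-extremal and `u, v, w` are distinct vertices with `uv, uw ∉ E(G)` and
`vw ∈ E(G)`, then the graph obtained from `G` by deleting the edge `vw` is also
`F`-extremal, and moreover, with `H = G - {u, v, w}`, the vectors `u⃗_{H,F}`,
`v⃗_{H,F}` and `w⃗_{H,F}` are all equal. -/
theorem isExtremal_deleteEdge {n : ℕ} (G : SimpleGraph (Fin n)) (F : TournFamily)
    (hG : IsExtremal G F) (u v w : Fin n) (huv : u ≠ v) (huw : u ≠ w) (hvw : v ≠ w)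
    (h1 : ¬ G.Adj u v) (h2 : ¬ G.Adj u w) (h3 : G.Adj v w) :
    IsExtremal (G.deleteEdges {s(v, w)}) F ∧
    ∀ H : (G.induce ({u, v, w} : Set (Fin n))ᶜ).Orient, FreeOrient F H →
      extVert G F ({u, v, w} : Set (Fin n))ᶜ u H =
        extVert G F ({u, v, w} : Set (Fin n))ᶜ w H ∧
      extVert G F ({u, v, w} : Set (Fin n))ᶜ w H =
        extVert G F ({u, v, w} : Set (Fin n))ᶜ v H := by
  have hA : ∀ a, a ∈ ({u, v, w} : Set (Fin n))ᶜ ↔ a ≠ u ∧ a ≠ v ∧ a ≠ w := by simp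
  generalize ({u, v, w} : Set (Fin n))ᶜ = A at hA ⊢
  have euw : ∀ R, (extensions G F A u R).card = (extensions G F A w R).card :=
    hG.card_extensions_eq_of_not_adj huv huw hvw hA h1 h2
  have euv : ∀ R, (extensions G F A u R).card = (extensions G F A v R).card :=
    hG.card_extensions_eq_of_not_adj huw huv hvw.symm
      (fun a => (hA a).trans (and_congr_right fun _ => and_comm)) h2 h1
  refine ⟨?_, fun H _ => ?_⟩
  · have hu : u ∉ A := fun h => ((hA u).1 h).1 rfl
    have hv : v ∉ A := fun h => ((hA v).1 h).2.1 rfl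
    have hw : w ∉ A := fun h => ((hA w).1 h).2.2 rfl
    set K := G.deleteEdges {s(v, w)} with hK
    have adjK : ∀ a b, K.Adj a b ↔ G.Adj a b ∧ ¬ (a = v ∧ b = w ∨ a = w ∧ b = v) := by
      intro a b
      simp [hK]
    have hins : ∀ a, a ∈ insert w A ↔ a ≠ u ∧ a ≠ v := by
      intro a
      simp only [Set.mem_insert_iff, hA]
      grind
    have hKA : ∀ a ∈ A, ∀ b ∈ A, (K.Adj a b ↔ G.Adj a b) := by
      intro a ha b hb
      simp [adjK, (hA a).1 ha]
    have Kuw : ¬ K.Adj u w := fun h => h2 ((adjK u w).1 h).1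
    have Kvw : ¬ K.Adj v w := by simp [adjK]
    have Kuv : ¬ K.Adj u v := fun h => h1 ((adjK u v).1 h).1
    have key : ∀ S, (extensions K F (insert w A) v S).card =
        (extensions K F (insert w A) u S).card := by
      intro S
      by_cases hS : S ∈ freeOrients K F (insert w A)
      · rw [card_extensions_insert hu hw huw Kuw hS, card_extensions_insert hv hw hvw Kvw hS,
          card_extensions_congr F hu hu hKA, card_extensions_congr F hv hv hKA, euv]
        · intro a ha
          simp [adjK, (hA a).1 ha]
        · intro a ha
          simp [adjK, huv, huw]
      · rw [card_extensions_eq_zero hS, card_extensions_eq_zero hS]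
    have hrep : K.replaceVertex u v = G.replaceVertex u v := by
      ext a b
      simp only [SimpleGraph.replaceVertex, adjK]
      split_ifs <;> simp_all
    refine (hG.replaceVertex huv h1).of_eq ?_
    rw [← hrep, numOrient_replaceVertex F huv hins, numOrient_eq_sum F huv hins Kuv]
    exact Finset.sum_congr rfl fun S _ => by rw [key]
  · simp only [extVert_eq_card]
    exact ⟨euw _, (euw _).symm.trans (euv _)⟩
end
end

section
/- Let k ≥ 4 be an integer, let G be a graph, let K be a complete subgraph of G with x vertices where x ∈ {k−1, k, k+1}, and let u be a vertex in V(G) \ V(K) adjacent to all vertices of K. Then for any orientation K⃗ of K, the number c_{𝓢_k}(u, K⃗) of ways to orient the edges between u and V(K) so that the resulting orientation of G[V(K) ∪ {u}] contains no strongly connected tournament on k vertices satisfies c_{𝓢_k}(u, K⃗) ≤ (x − k + 4)·2^{k−3}. -/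
open scoped Classical

noncomputable section

universe u

variable {V : Type u}

/-- A chain in a complete relation can be extended by one element placed after the head. -/
theorem exists_perm_isChain_cons {α : Type*} {R : α → α → Prop} (a : α) (l : List α) :
    ∀ c, (∀ b ∈ l, R a b ∨ R b a) → (c :: l).IsChain R → R c a →
      ∃ l' : List α, l'.Perm (a :: l) ∧ (c :: l').IsChain R := by
  induction l with
  | nil => exact fun c _ _ hca => ⟨[a], List.Perm.refl _, by simpa using hca⟩
  | cons d l ih =>
    intro c hl hc hca
    rw [List.isChain_cons_cons] at hc
    rcases hl d (by simp) with had | hda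
    · exact ⟨a :: d :: l, List.Perm.refl _, by simp [hca, had, hc.2]⟩
    · obtain ⟨l', hp, hch⟩ := ih d (fun b hb => hl b (by simp [hb])) hc.2 hda
      exact ⟨d :: l', (hp.cons d).trans (List.Perm.swap _ _ _), by simp [hc.1, hch]⟩

/-- Every list of distinct elements of a tournament can be permuted into a directed path. -/
theorem exists_perm_isChain {α : Type*} {R : α → α → Prop}
    (hR : ∀ a b, a ≠ b → R a b ∨ R b a) (l : List α) (hl : l.Nodup) :
    ∃ l' : List α, l'.Perm l ∧ l'.IsChain R := by
  induction l with
  | nil => exact ⟨[], List.Perm.refl _, by simp⟩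
  | cons a l ih =>
    rw [List.nodup_cons] at hl
    obtain ⟨m, hm, hch⟩ := ih hl.2
    have hne : ∀ b ∈ m, a ≠ b := fun b hb hab => hl.1 (hm.subset (hab ▸ hb))
    cases m with
    | nil => exact ⟨[a], hm.cons a, by simp⟩
    | cons b m =>
      rcases hR a b (hne b (by simp)) with h | h
      · exact ⟨a :: b :: m, hm.cons a, by simp [h, hch]⟩
      · obtain ⟨l', hp, hch'⟩ := exists_perm_isChain_cons a m b
          (fun c hc => hR a c (hne c (by simp [hc]))) hch h
        exact ⟨b :: l', ((hp.cons b).trans (List.Perm.swap _ _ _)).trans (hm.cons a), hch'⟩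

/-- Every finite tournament has a Hamiltonian path. -/
theorem exists_hamiltonianPath {α : Type*} [Fintype α] {R : α → α → Prop}
    (hR : ∀ a b, a ≠ b → R a b ∨ R b a) :
    ∃ (m : ℕ) (e : Fin m ≃ α), ∀ (i : ℕ) (h : i + 1 < m), R (e ⟨i, by omega⟩) (e ⟨i + 1, h⟩) := by
  obtain ⟨l, hp, hch⟩ := exists_perm_isChain hR Finset.univ.toList (Finset.nodup_toList _)
  have hnd : l.Nodup := hp.nodup_iff.2 (Finset.nodup_toList _)
  have hmem : ∀ a, a ∈ l := fun a => hp.mem_iff.2 (by simp)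
  refine ⟨l.length, hnd.getEquivOfForallMemList l hmem, fun i h => ?_⟩
  simpa using List.isChain_iff_getElem.1 hch i h

/-- A `k`-vertex directed path in an `𝓢 k`-free tournament has a cut all of whose edges
point forward. -/
theorem exists_forward_cut {G : SimpleGraph V} {k : ℕ} (hk : 1 ≤ k) (D : G.Orient)
    (hG : ∀ a b, a ≠ b → G.Adj a b) (hD : FreeOrient (SFam k) D) (φ : ℕ → V)
    (hinj : ∀ i < k, ∀ j < k, φ i = φ j → i = j)
    (hpath : ∀ i, i + 1 < k → D.1 (φ i) (φ (i + 1))) :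
    ∃ p, p + 1 < k ∧ ∀ i j, i ≤ p → p < j → j < k → D.1 (φ i) (φ j) := by
  set S : Fin k → Fin k → Prop := fun i j => D.1 (φ i) (φ j)
  have hadj : ∀ i j : Fin k, i ≠ j → G.Adj (φ i) (φ j) := fun i j hij =>
    hG _ _ fun h => hij (Fin.ext (hinj i i.2 j j.2 h))
  have hforw : ∀ (j : ℕ) (hj : j < k) (i : ℕ) (hi : i ≤ j),
      Relation.ReflTransGen S ⟨i, by omega⟩ ⟨j, hj⟩ := by
    intro j hj i hi
    induction j, hi using Nat.le_induction with
    | base => exact .refl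
    | succ j hij ih => exact (ih (by omega)).tail (hpath j hj)
  let last : Fin k := ⟨k - 1, by omega⟩
  let first : Fin k := ⟨0, by omega⟩
  have hback : ¬ Relation.ReflTransGen S last first := by
    intro hb
    refine hD k ⟨S, fun i j h => ?_, fun i j h => D.2.2 _ _ (hadj i j h)⟩ ⟨rfl, fun i j => ?_⟩
      ⟨fun i => φ i, fun i j h => Fin.ext (hinj i i.2 j j.2 h), fun i j h => h⟩
    · rintro rfl
      exact G.loopless.irrefl _ (D.2.1 _ _ h)
    · exact ((hforw (k - 1) (by omega) i (by omega)).trans hb).trans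
        (hforw j j.2 0 (by omega))
  let P : ℕ → Prop := fun j => ∃ h : j < k, Relation.ReflTransGen S last ⟨j, h⟩
  have hP : ∃ j, P j := ⟨k - 1, by omega, .refl⟩
  obtain ⟨hq, hreach⟩ := Nat.find_spec hP
  have hpos : Nat.find hP ≠ 0 := fun h0 => hback (by simpa only [h0] using hreach)
  refine ⟨Nat.find hP - 1, by omega, fun i j hi hj hjk => ?_⟩
  have hik : i < k := by omega
  have hnot : ¬ S ⟨j, hjk⟩ ⟨i, hik⟩ := fun h =>
    Nat.find_min hP (m := i) (by omega)
      ⟨hik, (hreach.trans (hforw j hjk _ (by omega))).tail h⟩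
  exact (D.2.2 _ _ (hadj ⟨i, hik⟩ ⟨j, hjk⟩ (by simp; omega))).2 hnot

/-- In an `𝓢 k`-free tournament, a vertex `u` off a directed path cannot have an edge to a
vertex of the path and an edge from a vertex between `k - 2` and `2 * k - 4` places later. -/
theorem not_adj_of_path {G : SimpleGraph V} {k m : ℕ} (hk : 3 ≤ k) (D : G.Orient)
    (hG : ∀ a b, a ≠ b → G.Adj a b) (hD : FreeOrient (SFam k) D) (v : ℕ → V) (u : V)
    (hinj : ∀ i < m, ∀ j < m, v i = v j → i = j)
    (hpath : ∀ i, i + 1 < m → D.1 (v i) (v (i + 1))) (hu : ∀ i < m, v i ≠ u)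
    (i t : ℕ) (ht : t + 2 ≤ k) (hm : i + (k - 2 + t) < m)
    (hout : D.1 u (v i)) : ¬ D.1 (v (i + (k - 2 + t))) u := by
  intro hin
  obtain ⟨a, hia, hat, hjump⟩ : ∃ a, i ≤ a ∧ a + t ≤ i + (k - 2) ∧ D.1 (v a) (v (a + t + 1)) := by
    rcases Nat.eq_zero_or_pos t with rfl | htpos
    · exact ⟨i, le_rfl, by omega, hpath i (by omega)⟩
    · obtain ⟨p, hp, hcut⟩ := exists_forward_cut (k := k) (by omega) D hG hD (fun l => v (i + l))
        (fun a ha b hb h => by have := hinj _ (by omega) _ (by omega) h; omega)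
        (fun l hl => hpath (i + l) (by omega))
      refine ⟨i + min p (k - 2 - t), by omega, by omega, ?_⟩
      have := hcut (min p (k - 2 - t)) (min p (k - 2 - t) + t + 1) (by omega) (by omega) (by omega)
      simpa only [add_assoc] using this
  let g : ℕ → ℕ := fun l => if i + l ≤ a then i + l else i + l + t
  let w : ℕ → V := fun l => if l + 1 < k then v (g l) else u
  have hg : ∀ l, l + 1 < k → g l < m := by
    intro l hl
    simp only [g]
    split_ifs <;> omega
  have hw : ∀ l, l + 1 < k → w l = v (g l) := fun l hl => if_pos hl
  have hwu : ∀ l, ¬ l + 1 < k → w l = u := fun l hl => if_neg hl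
  have hw0 : w 0 = v i := by
    rw [hw 0 (by omega)]
    simp [g, hia]
  have hwlast : w (k - 2) = v (i + (k - 2 + t)) := by
    rw [hw (k - 2) (by omega)]
    simp only [g]
    congr 1
    split_ifs <;> omega
  have hwinj : ∀ b < k, ∀ c < k, w b = w c → b = c := by
    intro b hb c hc h
    by_cases hb' : b + 1 < k <;> by_cases hc' : c + 1 < k
    · rw [hw b hb', hw c hc'] at h
      have := hinj _ (hg b hb') _ (hg c hc') h
      simp only [g] at this
      split_ifs at this <;> omega
    · rw [hw b hb', hwu c hc'] at h
      exact (hu _ (hg b hb') h).elim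
    · rw [hwu b hb', hw c hc'] at h
      exact (hu _ (hg c hc') h.symm).elim
    · omega
  have hwpath : ∀ l, l + 1 < k → D.1 (w l) (w (l + 1)) := by
    intro l hl
    by_cases hl' : l + 1 + 1 < k
    · rw [hw l hl, hw (l + 1) hl']
      simp only [g]
      rcases lt_trichotomy (i + l) a with h | h | h
      · rw [if_pos (by omega), if_pos (by omega)]
        exact hpath _ (by omega)
      · rw [if_pos (by omega), if_neg (by omega), h,
          show i + (l + 1) + t = a + t + 1 by omega]
        exact hjump
      · rw [if_neg (by omega), if_neg (by omega),
          show i + (l + 1) + t = i + l + t + 1 by omega]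
        exact hpath _ (by have := hg (l + 1) hl'; simp only [g] at this; split_ifs at this <;> omega)
    · rw [hwu (l + 1) hl', show l = k - 2 by omega, hwlast]
      exact hin
  obtain ⟨p, hp, hcut⟩ := exists_forward_cut (k := k) (by omega) D hG hD w hwinj hwpath
  have h := hcut 0 (k - 1) (by omega) (by omega) (by omega)
  rw [hw0, hwu (k - 1) (by omega)] at h
  exact (D.2.2 _ _ (D.2.1 _ _ h)).1 h hout

/-- A Boolean sequence has no `true` entry followed by a `false` entry at least `d`
places later. -/
def NoFarDescent (d : ℕ) {m : ℕ} (s : Fin m → Bool) : Prop :=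
  ∀ i j : Fin m, (i : ℕ) + d ≤ j → s i = true → s j = true

theorem card_noFarDescent_le (d m : ℕ) :
    Nat.card {s : Fin (m + (d + 1)) → Bool // NoFarDescent (d + 1) s} ≤ (m + 2) * 2 ^ d := by
  induction m with
  | zero =>
    refine (Finite.card_subtype_le _).trans ?_
    simp [pow_succ, mul_comm]
  | succ m ih =>
    let A := {s : Fin (m + (d + 1)) → Bool // NoFarDescent (d + 1) s}
    let f : {s : Fin (m + 1 + (d + 1)) → Bool // NoFarDescent (d + 1) s} → (Fin d → Bool) ⊕ A :=
      fun s => if s.1 ⟨0, by omega⟩ = true then .inl fun i => s.1 ⟨i + 1, by omega⟩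
        else .inr ⟨fun i => s.1 ⟨i + 1, by omega⟩,
          fun i j hij => s.2 _ _ (by simp only; omega)⟩
    have hf : Function.Injective f := by
      intro s s' h
      by_cases h0 : s.1 ⟨0, by omega⟩ = true <;> by_cases h0' : s'.1 ⟨0, by omega⟩ = true
      · simp only [f, if_pos h0, if_pos h0', Sum.inl.injEq] at h
        refine Subtype.ext (funext fun i => ?_)
        rcases Nat.eq_zero_or_pos i.1 with hi | hi
        · rw [show i = ⟨0, by omega⟩ from Fin.ext hi, h0, h0']
        · by_cases hid : i.1 ≤ d
          · have := congrFun h ⟨i.1 - 1, by omega⟩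
            simpa only [Nat.sub_add_cancel hi] using this
          · rw [s.2 ⟨0, by omega⟩ i (by simp only; omega) h0,
              s'.2 ⟨0, by omega⟩ i (by simp only; omega) h0']
      · simp only [f, if_pos h0, if_neg h0', reduceCtorEq] at h
      · simp only [f, if_neg h0, if_pos h0', reduceCtorEq] at h
      · simp only [f, if_neg h0, if_neg h0', Sum.inr.injEq] at h
        refine Subtype.ext (funext fun i => ?_)
        rcases Nat.eq_zero_or_pos i.1 with hi | hi
        · rw [show i = ⟨0, by omega⟩ from Fin.ext hi, Bool.eq_false_of_not_eq_true h0,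
            Bool.eq_false_of_not_eq_true h0']
        · have := congrFun (congrArg Subtype.val h) ⟨i.1 - 1, by omega⟩
          simpa only [Nat.sub_add_cancel hi] using this
    refine (Nat.card_le_card_of_injective f hf).trans ?_
    rw [Nat.card_sum]
    have : Nat.card (Fin d → Bool) = 2 ^ d := by simp
    rw [this, show (m + 1 + 2) * 2 ^ d = 2 ^ d + (m + 2) * 2 ^ d by ring]
    exact Nat.add_le_add_left ih _

/-- If `K` is a clique of `G` with `x ∈ {k-1, k, k+1}` vertices and `u ∉ K` is adjacent
to all vertices of `K`, then for any orientation `K⃗` of `K` the number of ways to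
orient the edges between `u` and `K` avoiding a strongly connected tournament on `k`
vertices is at most `(x - k + 4) · 2 ^ (k - 3)`. -/
theorem extVert_le_of_clique {n : ℕ} (G : SimpleGraph (Fin n)) (k x : ℕ) (hk : 4 ≤ k)
    (hx : x = k - 1 ∨ x = k ∨ x = k + 1)
    (K : Finset (Fin n)) (hK : G.IsClique ↑K) (hcard : K.card = x)
    (u : Fin n) (hu : u ∉ K) (hadj : ∀ w ∈ K, G.Adj u w)
    (T : (G.induce (↑K : Set (Fin n))).Orient) :
    extVert G (SFam k) (↑K : Set (Fin n)) u T ≤ (x + 4 - k) * 2 ^ (k - 3) := by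
  have hG : ∀ a b : ↑(insert u (↑K : Set (Fin n))), a ≠ b →
      (G.induce (insert u (↑K : Set (Fin n)))).Adj a b := by
    have hclique : G.IsClique (insert u (↑K : Set (Fin n))) :=
      hK.insert fun w hw _ => hadj w hw
    exact fun a b hab => hclique a.2 b.2 fun h => hab (Subtype.ext h)
  obtain ⟨y, e, he⟩ := exists_hamiltonianPath (R := T.1) fun a b hab => by
    have := T.2.2 a b (hK a.2 b.2 fun h => hab (Subtype.ext h))
    tauto
  obtain rfl : y = x := by simpa [hcard] using Fintype.card_congr e
  let u' : ↑(insert u (↑K : Set (Fin n))) := ⟨u, Set.mem_insert _ _⟩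
  let incl : ↑(↑K : Set (Fin n)) → ↑(insert u (↑K : Set (Fin n))) :=
    fun a => ⟨a.1, Set.mem_insert_of_mem u a.2⟩
  have hincl_inj : Function.Injective incl := Set.inclusion_injective (Set.subset_insert _ _)
  have hincl_ne : ∀ a, incl a ≠ u' := by
    rintro ⟨a, ha⟩ h
    obtain rfl : a = u := congrArg Subtype.val h
    exact hu ha
  let v : ℕ → ↑(insert u (↑K : Set (Fin n))) := fun i => if h : i < y then incl (e ⟨i, h⟩) else u'
  have hv : ∀ i (h : i < y), v i = incl (e ⟨i, h⟩) := fun i h => dif_pos h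
  obtain ⟨m, rfl⟩ : ∃ m, y = m + (k - 3 + 1) := ⟨y - (k - 3 + 1), by omega⟩
  have hbound := card_noFarDescent_le (k - 3) m
  rw [show m + (k - 3 + 1) + 4 - k = m + 2 by omega]
  refine le_trans (Nat.card_le_card_of_injective (fun D =>
    (⟨fun i => decide (D.1.1 u' (incl (e i))), ?_⟩ :
      {s : Fin (m + (k - 3 + 1)) → Bool // NoFarDescent (k - 3 + 1) s})) ?_) hbound
  · intro i j hij hi
    simp only [decide_eq_true_eq] at hi ⊢
    by_contra hj
    have hin : D.1.1 (incl (e j)) u' := (D.1.2.2 _ _ (hG _ _ (hincl_ne _))).2 hj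
    have hji : i.1 + (k - 2 + (j.1 - i.1 - (k - 2))) = j.1 := by omega
    refine not_adj_of_path (m := m + (k - 3 + 1)) (by omega) D.1 hG D.2.1 v u' ?_ ?_ ?_
      i (j - i - (k - 2)) (by omega) (by omega) (by rw [hv i i.2]; exact hi)
      (by rw [hji, hv j j.2]; exact hin)
    · intro a ha b hb h
      rw [hv a ha, hv b hb] at h
      exact congrArg Fin.val (e.injective (hincl_inj h))
    · intro a ha
      rw [hv a (by omega), hv (a + 1) ha]
      exact (D.2.2 _ _ (e ⟨a, by omega⟩).2 (e ⟨a + 1, ha⟩).2).2 (he a ha)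
    · intro a ha h
      rw [hv a ha] at h
      exact hincl_ne _ h
  · intro D D' h
    replace h := congrArg Subtype.val h
    have hout : ∀ b, b ≠ u' → (D.1.1 u' b ↔ D'.1.1 u' b) := by
      rintro ⟨b, rfl | hb⟩ hbu
      · exact (hbu rfl).elim
      · have := congrFun h (e.symm ⟨b, hb⟩)
        simpa [incl] using this
    refine Subtype.ext (Subtype.ext (funext fun a => funext fun b => propext ?_))
    by_cases hab : a = b
    · subst hab
      exact ⟨fun h => ((D.1.2.1 _ _ h).ne rfl).elim, fun h => ((D'.1.2.1 _ _ h).ne rfl).elim⟩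
    by_cases ha : a = u'
    · subst ha
      exact hout b (Ne.symm hab)
    by_cases hb : b = u'
    · subst hb
      rw [D.1.2.2 _ _ (hG _ _ hab), D'.1.2.2 _ _ (hG _ _ hab), hout a ha]
    have hmem : ∀ c : ↑(insert u (↑K : Set (Fin n))), c ≠ u' → c.1 ∈ (↑K : Set (Fin n)) :=
      fun c hc => c.2.resolve_left fun h => hc (Subtype.ext h)
    exact (D.2.2 a b (hmem a ha) (hmem b hb)).trans (D'.2.2 a b (hmem a ha) (hmem b hb)).symm
end
end

section
/- Let k ≥ 4 be an integer, let G be a graph, let K be a complete subgraph of G with k−1 vertices, and let u, v be adjacent vertices in V(G) \ V(K) that are each adjacent to all vertices of K. Then for any orientation K⃗ of K, the number c_{𝓢_k}({u,v}, K⃗) of ways to orient the edge {u,v} together with all edges between {u,v} and V(K) so that the resulting orientation of G[V(K) ∪ {u,v}] contains no strongly connected tournament on k vertices satisfies c_{𝓢_k}({u,v}, K⃗) ≤ 6·2^{2k−5}. -/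
open scoped Classical

noncomputable section

universe u

variable {V : Type u}

/-- `c_F({u,v}, H⃗)`: the number of ways to orient the edge `uv` together with the
edges of `G` between `{u, v}` and `A` so that the resulting orientation of the induced
subgraph on `A ∪ {u, v}`, extending the orientation `H` of the induced subgraph on `A`,
is `F`-free. -/
def extEdge (G : SimpleGraph V) (F : TournFamily) (A : Set V) (u v : V)
    (H : (G.induce A).Orient) : ℕ :=
  Nat.card {D : (G.induce (insert u (insert v A))).Orient // FreeOrient F D ∧
    ∀ (a b : V) (ha : a ∈ A) (hb : b ∈ A),
      (D.1 ⟨a, Set.mem_insert_of_mem u (Set.mem_insert_of_mem v ha)⟩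
        ⟨b, Set.mem_insert_of_mem u (Set.mem_insert_of_mem v hb)⟩ ↔
        H.1 ⟨a, ha⟩ ⟨b, hb⟩)}

/-- `ReachIn R S x y`: there is a directed `R`-walk from `x` to `y` inside `S`. -/
def ReachIn {α : Type*} (R : α → α → Prop) (S : Finset α) : α → α → Prop :=
  Relation.ReflTransGen fun a b => a ∈ S ∧ b ∈ S ∧ R a b

/-- The relation `R` is strongly connected on `S`. -/
def StrongOn {α : Type*} (R : α → α → Prop) (S : Finset α) : Prop :=
  ∀ x ∈ S, ∀ y ∈ S, ReachIn R S x y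

section Reachability

variable {α : Type*} {R Q : α → α → Prop} {S S' : Finset α} {x y z : α}

theorem ReachIn.step (hx : x ∈ S) (hy : y ∈ S) (h : R x y) : ReachIn R S x y :=
  Relation.ReflTransGen.single ⟨hx, hy, h⟩

theorem ReachIn.trans (h : ReachIn R S x y) (h' : ReachIn R S y z) : ReachIn R S x z :=
  Relation.ReflTransGen.trans h h'

theorem ReachIn.mono (hS : S ⊆ S') (hR : ∀ a ∈ S, ∀ b ∈ S, R a b → Q a b)
    (h : ReachIn R S x y) : ReachIn Q S' x y :=
  Relation.ReflTransGen.mono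
    (fun _ _ hab => ⟨hS hab.1, hS hab.2.1, hR _ hab.1 _ hab.2.1 hab.2.2⟩) _ _ h

theorem ReachIn.of_swap (h : ReachIn (Function.swap R) S x y) : ReachIn R S y x := by
  rw [ReachIn, ← Relation.reflTransGen_swap]
  exact Relation.ReflTransGen.mono (fun _ _ hab => ⟨hab.2.1, hab.1, hab.2.2⟩) _ _ h

theorem strongOn_of_hub (h : ∀ y ∈ S, ReachIn R S x y ∧ ReachIn R S y x) : StrongOn R S :=
  fun a ha b hb => (h a ha).2.trans (h b hb).1

/-- A nonempty tournament has a vertex that every vertex reaches. -/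
theorem exists_terminal (hne : S.Nonempty) (htot : ∀ x ∈ S, ∀ y ∈ S, x ≠ y → R x y ∨ R y x) :
    ∃ y ∈ S, ∀ x ∈ S, ReachIn R S x y := by
  induction hne using Finset.Nonempty.cons_induction with
  | singleton a => exact ⟨a, by simp, by
      intro x hx
      obtain rfl := Finset.mem_singleton.1 hx
      exact Relation.ReflTransGen.refl⟩
  | cons a s ha hs ih =>
    obtain ⟨y, hy, hreach⟩ := ih fun x hx y hy =>
      htot x (Finset.mem_cons_of_mem hx) y (Finset.mem_cons_of_mem hy)
    have hsub : s ⊆ Finset.cons a s ha := Finset.subset_cons ha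
    have hreach' : ∀ x ∈ s, ReachIn R (Finset.cons a s ha) x y := fun x hx =>
      (hreach x hx).mono hsub fun _ _ _ _ h => h
    have hac : a ∈ Finset.cons a s ha := Finset.mem_cons_self a s
    have hay : a ≠ y := fun h => ha (h ▸ hy)
    rcases htot a hac y (hsub hy) hay with h | h
    · refine ⟨y, hsub hy, fun x hx => ?_⟩
      rcases Finset.mem_cons.1 hx with rfl | hx
      · exact ReachIn.step hac (hsub hy) h
      · exact hreach' x hx
    · refine ⟨a, hac, fun x hx => ?_⟩
      rcases Finset.mem_cons.1 hx with rfl | hx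
      · exact Relation.ReflTransGen.refl
      · exact (hreach' x hx).trans (ReachIn.step (hsub hy) hac h)

/-- A nonempty tournament has a vertex that reaches every vertex. -/
theorem exists_initial (hne : S.Nonempty) (htot : ∀ x ∈ S, ∀ y ∈ S, x ≠ y → R x y ∨ R y x) :
    ∃ x ∈ S, ∀ y ∈ S, ReachIn R S x y := by
  obtain ⟨x, hx, h⟩ := exists_terminal (R := Function.swap R) hne
    fun x hx y hy hxy => (htot x hx y hy hxy).symm
  exact ⟨x, hx, fun y hy => (h y hy).of_swap⟩

/-- In a tournament without a sink, at least three vertices are reached by every vertex. -/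
theorem exists_three_terminal (hne : S.Nonempty)
    (hT : ∀ x ∈ S, ∀ y ∈ S, x ≠ y → (R x y ↔ ¬ R y x))
    (hsink : ∀ t ∈ S, ∃ y ∈ S, y ≠ t ∧ R t y) :
    ∃ e : Fin 3 → S, Function.Injective e ∧ ∀ i, ∀ x ∈ S, ReachIn R S x (e i) := by
  obtain ⟨a, ha, hra⟩ := exists_terminal (R := R) hne fun x hx y hy hxy => by
    have := hT x hx y hy hxy
    tauto
  obtain ⟨b, hb, hba, hab⟩ := hsink a ha
  obtain ⟨c, hc, hcb, hbc⟩ := hsink b hb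
  have hca : c ≠ a := by
    rintro rfl
    exact (hT _ hc _ hb hba.symm).1 hab hbc
  have hrb : ∀ x ∈ S, ReachIn R S x b := fun x hx => (hra x hx).trans (.step ha hb hab)
  have hrc : ∀ x ∈ S, ReachIn R S x c := fun x hx => (hrb x hx).trans (.step hb hc hbc)
  refine ⟨![⟨a, ha⟩, ⟨b, hb⟩, ⟨c, hc⟩], ?_, ?_⟩
  · intro i j
    fin_cases i <;> fin_cases j <;> simp [hba, hcb, hca, hba.symm, hcb.symm, hca.symm]
  · intro i
    fin_cases i
    exacts [hra, hrb, hrc]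

/-- In a tournament without a source, at least three vertices reach every vertex. -/
theorem exists_three_initial (hne : S.Nonempty)
    (hT : ∀ x ∈ S, ∀ y ∈ S, x ≠ y → (R x y ↔ ¬ R y x))
    (hsource : ∀ t ∈ S, ∃ y ∈ S, y ≠ t ∧ R y t) :
    ∃ e : Fin 3 → S, Function.Injective e ∧ ∀ i, ∀ x ∈ S, ReachIn R S (e i) x := by
  obtain ⟨e, he, h⟩ := exists_three_terminal (R := Function.swap R) hne
    (fun x hx y hy hxy => hT y hy x hx hxy.symm) hsource
  exact ⟨e, he, fun i x hx => (h i x hx).of_swap⟩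

/-- A vertex that sends an edge to an initial vertex of `S` and receives one from a terminal
vertex of `S` makes `S` strongly connected. -/
theorem strongOn_insert [DecidableEq α] {u : α} (hx : x ∈ S) (hy : y ∈ S)
    (hinit : ∀ z ∈ S, ReachIn R S x z) (hterm : ∀ z ∈ S, ReachIn R S z y)
    (hux : R u x) (hyu : R y u) : StrongOn R (insert u S) := by
  have hsub : S ⊆ insert u S := Finset.subset_insert u S
  have hu : u ∈ insert u S := Finset.mem_insert_self u S
  refine strongOn_of_hub (x := u) fun z hz => ?_
  rcases Finset.mem_insert.1 hz with rfl | hz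
  · exact ⟨.refl, .refl⟩
  · exact ⟨(ReachIn.step hu (hsub hx) hux).trans ((hinit z hz).mono hsub fun _ _ _ _ h => h),
      ((hterm z hz).mono hsub fun _ _ _ _ h => h).trans (.step (hsub hy) hu hyu)⟩

/-- A path `u → v` closing up a walk from an initial to a terminal vertex of `S` makes `S`
strongly connected. -/
theorem strongOn_insert_insert [DecidableEq α] {u v : α} (hx : x ∈ S) (hy : y ∈ S)
    (hinit : ∀ z ∈ S, ReachIn R S x z) (hterm : ∀ z ∈ S, ReachIn R S z y)
    (hyu : R y u) (huv : R u v) (hvx : R v x) : StrongOn R (insert u (insert v S)) := by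
  have hsub : S ⊆ insert v S := Finset.subset_insert v S
  have hv : v ∈ insert v S := Finset.mem_insert_self v S
  have hvx' := ReachIn.step (R := R) hv (hsub hx) hvx
  have hinit' : ∀ z ∈ S, ReachIn R (insert v S) x z := fun z hz =>
    (hinit z hz).mono hsub fun _ _ _ _ h => h
  have hterm' : ∀ z ∈ S, ReachIn R (insert v S) z y := fun z hz =>
    (hterm z hz).mono hsub fun _ _ _ _ h => h
  refine strongOn_insert hv (hsub hy) (fun z hz => ?_) (fun z hz => ?_) huv hyu
  · rcases Finset.mem_insert.1 hz with rfl | hz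
    · exact .refl
    · exact hvx'.trans (hinit' z hz)
  · rcases Finset.mem_insert.1 hz with rfl | hz
    · exact hvx'.trans (hterm' x hx)
    · exact hterm' z hz

end Reachability

section Counting

/-- If membership in `F` constrains the coordinates `e i` by `p`, then the density of `F` is at most
that of `p`. -/
theorem card_mul_le_of_comp {ι E : Type*} [Fintype ι] [DecidableEq ι] [Fintype E]
    (e : ι → E) (he : Function.Injective e) (p : (ι → Bool) → Bool)
    (F : Finset (E → Bool)) (hF : ∀ f ∈ F, p (f ∘ e) = true) :
    F.card * 2 ^ Fintype.card ι ≤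
      (Finset.univ.filter fun g => p g = true).card * 2 ^ Fintype.card E := by
  let C := {x : E // x ∉ Set.range e}
  let enc : (E → Bool) → (ι → Bool) × (C → Bool) := fun f => (f ∘ e, fun x => f x)
  have henc : Function.Injective enc := by
    intro f g h
    obtain ⟨h1, h2⟩ := Prod.mk.inj h
    funext x
    by_cases hx : x ∈ Set.range e
    · obtain ⟨i, rfl⟩ := hx
      exact congrFun h1 i
    · exact congrFun h2 ⟨x, hx⟩
  have hcard : F.card ≤ ((Finset.univ.filter fun g => p g = true) ×ˢ
      (Finset.univ : Finset (C → Bool))).card :=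
    Finset.card_le_card_of_injOn enc (fun f hf => by simp [enc, hF f hf]) henc.injOn
  have hE : Fintype.card E = Fintype.card C + Fintype.card ι := by
    rw [Fintype.card_subtype_compl, ← Set.card_range_of_injective he]
    exact (Nat.sub_add_cancel (Fintype.card_subtype_le _)).symm
  rw [Finset.card_product, Finset.card_univ, Fintype.card_fun, Fintype.card_bool] at hcard
  calc _ ≤ _ := Nat.mul_le_mul_right _ hcard
    _ = _ := by rw [hE, pow_add, mul_assoc]

theorem card_extCode_index {α : Type*} (K : Finset α) :
    Fintype.card (Option (Bool × K)) = 2 * K.card + 1 := by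
  simp

theorem injective_some_prodMk {α : Type*} {j : ℕ} {K : Finset α} {x : Fin j → K}
    (hx : Function.Injective x) :
    Function.Injective fun i : Bool × Fin j => (some (i.1, x i.2) : Option (Bool × K)) := by
  rintro ⟨b, i⟩ ⟨c, j⟩ h
  simp only [Option.some.injEq, Prod.mk.injEq] at h
  exact Prod.ext h.1 (hx h.2)

end Counting

section Core

variable {α : Type*} [DecidableEq α]

/-- The bits `f` describe a tournament extending `T` from `K` to `K ∪ {w false, w true}`
without strongly connected subtournaments on `k` vertices: `f (some (b, x))` says that the edge
between `w b` and `x` leaves `w b`, and `f none` that the remaining edge leaves `w false`. -/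
structure IsExtCode (K : Finset α) (T : α → α → Prop) (w : Bool → α) (k : ℕ)
    (f : Option (Bool × K) → Bool) (R : α → α → Prop) : Prop where
  agree : ∀ x ∈ K, ∀ y ∈ K, T x y → R x y
  out : ∀ b x, f (some (b, x)) = true → R (w b) x
  into : ∀ b x, f (some (b, x)) = false → R x (w b)
  edge : R (w (!f none)) (w (f none))
  free : ∀ S ⊆ insert (w false) (insert (w true) K), S.card = k → ¬ StrongOn R S

variable {K : Finset α} {T : α → α → Prop} {w : Bool → α} {k : ℕ}
  {f : Option (Bool × K) → Bool} {R : α → α → Prop}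

theorem IsExtCode.not_out_into (h : IsExtCode K T w k f R) (hw : ∀ b, w b ∉ K)
    (hk : K.card + 1 = k) (b : Bool) {x y : K} (hx : ∀ z ∈ K, ReachIn T K x z)
    (hy : ∀ z ∈ K, ReachIn T K z y) (h1 : f (some (b, x)) = true) : f (some (b, y)) = true := by
  by_contra h2
  refine h.free (insert (w b) K) ?_ (by rw [Finset.card_insert_of_notMem (hw b), hk])
    (strongOn_insert x.2 y.2 (fun z hz => (hx z hz).mono subset_rfl h.agree)
      (fun z hz => (hy z hz).mono subset_rfl h.agree) (h.out b x h1)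
      (h.into b y (by simpa using h2)))
  intro z hz
  cases b <;> simp only [Finset.mem_insert] at hz ⊢ <;> tauto

theorem IsExtCode.not_through_edge (h : IsExtCode K T w k f R) (hw : ∀ b, w b ∉ K)
    (hinj : w false ≠ w true) (hk : K.card + 1 = k) {r : α} (hr : r ∈ K) {x y : K}
    (hxr : (x : α) ≠ r) (hyr : (y : α) ≠ r)
    (hx : ∀ z ∈ K.erase r, ReachIn T (K.erase r) x z)
    (hy : ∀ z ∈ K.erase r, ReachIn T (K.erase r) z y)
    (h1 : f (some (f none, x)) = true) : f (some (!f none, y)) = true := by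
  by_contra h2
  have hsub : K.erase r ⊆ K := Finset.erase_subset r K
  have hagree : ∀ a ∈ K.erase r, ∀ b ∈ K.erase r, T a b → R a b := fun a ha b hb =>
    h.agree a (hsub ha) b (hsub hb)
  have hne : w (!f none) ≠ w (f none) := by
    cases f none
    exacts [hinj.symm, hinj]
  refine h.free (insert (w (!f none)) (insert (w (f none)) (K.erase r))) ?_ ?_
    (strongOn_insert_insert (Finset.mem_erase.2 ⟨hxr, x.2⟩) (Finset.mem_erase.2 ⟨hyr, y.2⟩)
      (fun z hz => (hx z hz).mono subset_rfl hagree)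
      (fun z hz => (hy z hz).mono subset_rfl hagree)
      (h.into _ y (by simpa using h2)) h.edge (h.out _ x h1))
  · intro z hz
    cases hf : f none <;> simp only [hf, Bool.not_true, Bool.not_false, Finset.mem_insert,
      Finset.mem_erase] at hz ⊢ <;> tauto
  · have hm : ∀ b, w b ∉ K.erase r := fun b hb => hw b (hsub hb)
    rw [Finset.card_insert_of_notMem, Finset.card_insert_of_notMem (hm _),
      Finset.card_erase_add_one hr, hk]
    rw [Finset.mem_insert]
    exact fun hz => hz.elim hne (hm _)

variable {F : Finset (Option (Bool × K) → Bool)}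

/-- Three vertices that are both initial and terminal. -/
theorem card_le_of_three_hubs (hF : ∀ f ∈ F, ∃ R, IsExtCode K T w k f R)
    (hw : ∀ b, w b ∉ K) (hk : K.card + 1 = k) {x : Fin 3 → K} (hinj : Function.Injective x)
    (hx : ∀ i, ∀ z ∈ K, ReachIn T K (x i) z) (hx' : ∀ i, ∀ z ∈ K, ReachIn T K z (x i)) :
    F.card * 64 ≤ 4 * 2 ^ (2 * K.card + 1) := by
  have h := card_mul_le_of_comp (fun i : Bool × Fin 3 => (some (i.1, x i.2) : Option (Bool × K)))
    (injective_some_prodMk hinj)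
    (fun g => decide (∀ b i j, g (b, i) = true → g (b, j) = true)) F fun f hf => by
      obtain ⟨R, hR⟩ := hF f hf
      simp only [Function.comp_apply, decide_eq_true_eq]
      exact fun b i j => hR.not_out_into hw hk b (hx i) (hx' j)
  rw [card_extCode_index] at h
  refine h.trans (Nat.mul_le_mul_right _ ?_)
  decide +kernel

/-- Three initial vertices and another terminal one. -/
theorem card_le_of_three_initial (hF : ∀ f ∈ F, ∃ R, IsExtCode K T w k f R)
    (hw : ∀ b, w b ∉ K) (hk : K.card + 1 = k) {x : Fin 4 → K} (hinj : Function.Injective x)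
    (hx : ∀ i : Fin 3, ∀ z ∈ K, ReachIn T K (x i.succ) z)
    (hx' : ∀ z ∈ K, ReachIn T K z (x 0)) :
    F.card * 256 ≤ 81 * 2 ^ (2 * K.card + 1) := by
  have h := card_mul_le_of_comp (fun i : Bool × Fin 4 => (some (i.1, x i.2) : Option (Bool × K)))
    (injective_some_prodMk hinj)
    (fun g => decide (∀ b, ∀ i : Fin 3, g (b, i.succ) = true → g (b, 0) = true)) F
    fun f hf => by
      obtain ⟨R, hR⟩ := hF f hf
      simp only [Function.comp_apply, decide_eq_true_eq]
      exact fun b i => hR.not_out_into hw hk b (hx i) hx'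
  rw [card_extCode_index] at h
  refine h.trans (Nat.mul_le_mul_right _ ?_)
  decide +kernel

/-- Three terminal vertices and another initial one. -/
theorem card_le_of_three_terminal (hF : ∀ f ∈ F, ∃ R, IsExtCode K T w k f R)
    (hw : ∀ b, w b ∉ K) (hk : K.card + 1 = k) {x : Fin 4 → K} (hinj : Function.Injective x)
    (hx : ∀ i : Fin 3, ∀ z ∈ K, ReachIn T K z (x i.succ))
    (hx' : ∀ z ∈ K, ReachIn T K (x 0) z) :
    F.card * 256 ≤ 81 * 2 ^ (2 * K.card + 1) := by
  have h := card_mul_le_of_comp (fun i : Bool × Fin 4 => (some (i.1, x i.2) : Option (Bool × K)))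
    (injective_some_prodMk hinj)
    (fun g => decide (∀ b, ∀ i : Fin 3, g (b, 0) = true → g (b, i.succ) = true)) F
    fun f hf => by
      obtain ⟨R, hR⟩ := hF f hf
      simp only [Function.comp_apply, decide_eq_true_eq]
      exact fun b i => hR.not_out_into hw hk b hx' (hx i)
  rw [card_extCode_index] at h
  refine h.trans (Nat.mul_le_mul_right _ ?_)
  decide +kernel

/-- The constraints on the edges at a source `0`, a sink `1` and a further vertex `2`, which
depends on the outer vertex, when the edge between the outer vertices is oriented by `d`. -/
def sourceSinkConstraint (d : Bool) (g : Option (Bool × Fin 3) → Bool) : Bool :=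
  decide (g none = d) &&
  decide (∀ b, g (some (b, 0)) = true → g (some (b, 1)) = true) &&
  decide (g (some (d, 0)) = true → g (some (!d, 2)) = true) &&
  decide (g (some (d, 2)) = true → g (some (!d, 1)) = true) &&
  decide (g (some (d, 0)) = true → g (some (!d, 1)) = true)

theorem card_sourceSinkConstraint (d : Bool) :
    (Finset.univ.filter fun g => sourceSinkConstraint d g = true).card = 24 := by
  revert d
  decide +kernel

/-- A source and a sink. -/
theorem card_le_of_source_sink (hF : ∀ f ∈ F, ∃ R, IsExtCode K T w k f R)
    (hw : ∀ b, w b ∉ K) (hne : w false ≠ w true) (hk : K.card + 1 = k) (hk3 : 3 ≤ K.card)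
    (hT : ∀ x ∈ K, ∀ y ∈ K, x ≠ y → (T x y ↔ ¬ T y x)) {s t : α} (hs : s ∈ K) (ht : t ∈ K)
    (hs' : ∀ y ∈ K, y ≠ s → T s y) (ht' : ∀ y ∈ K, y ≠ t → T y t) :
    F.card * 128 ≤ 48 * 2 ^ (2 * K.card + 1) := by
  have hst : s ≠ t := by
    rintro rfl
    obtain ⟨y, hy, hys⟩ := Finset.exists_mem_ne (by omega : 1 < K.card) s
    exact (hT y hy s hs hys).1 (ht' y hy hys) (hs' y hy hys)
  have htot : ∀ x ∈ K, ∀ y ∈ K, x ≠ y → T x y ∨ T y x := fun x hx y hy hxy => by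
    have := hT x hx y hy hxy
    tauto
  have hsource : ∀ S ⊆ K, s ∈ S → ∀ z ∈ S, ReachIn T S s z := fun S hS hsS z hz => by
    rcases eq_or_ne z s with rfl | hzs
    · exact .refl
    · exact .step hsS hz (hs' z (hS hz) hzs)
  have hsink : ∀ S ⊆ K, t ∈ S → ∀ z ∈ S, ReachIn T S z t := fun S hS htS z hz => by
    rcases eq_or_ne z t with rfl | hzt
    · exact .refl
    · exact .step hz htS (ht' z (hS hz) hzt)
  set M := (K.erase s).erase t with hM
  have hMK : M ⊆ K := (Finset.erase_subset _ _).trans (Finset.erase_subset _ _)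
  have hMcard : 0 < M.card := by
    rw [hM, Finset.card_erase_of_mem (Finset.mem_erase.2 ⟨hst.symm, ht⟩),
      Finset.card_erase_of_mem hs]
    omega
  have hMtot : ∀ x ∈ M, ∀ y ∈ M, x ≠ y → T x y ∨ T y x := fun x hx y hy =>
    htot x (hMK hx) y (hMK hy)
  obtain ⟨a, ha, hinit⟩ := exists_initial (Finset.card_pos.1 hMcard) hMtot
  obtain ⟨c, hc, hterm⟩ := exists_terminal (Finset.card_pos.1 hMcard) hMtot
  obtain ⟨hat, has, haK⟩ : a ≠ t ∧ a ≠ s ∧ a ∈ K := by simpa [hM] using ha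
  obtain ⟨hct, hcs, hcK⟩ : c ≠ t ∧ c ≠ s ∧ c ∈ K := by simpa [hM] using hc
  have hinit' : ∀ z ∈ K.erase s, ReachIn T (K.erase s) a z := fun z hz => by
    have haS : a ∈ K.erase s := Finset.mem_erase.2 ⟨has, haK⟩
    rcases eq_or_ne z t with rfl | hzt
    · exact .step haS hz (ht' a haK hat)
    · exact (hinit z (Finset.mem_erase.2 ⟨hzt, hz⟩)).mono (Finset.erase_subset _ _)
        fun _ _ _ _ h => h
  have hterm' : ∀ z ∈ K.erase t, ReachIn T (K.erase t) z c := fun z hz => by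
    have hcS : c ∈ K.erase t := Finset.mem_erase.2 ⟨hct, hcK⟩
    rcases eq_or_ne z s with rfl | hzs
    · exact .step hz hcS (hs' c hcK hcs)
    · refine (hterm z ?_).mono ?_ fun _ _ _ _ h => h
      · rw [hM, Finset.erase_right_comm]
        exact Finset.mem_erase.2 ⟨hzs, hz⟩
      · rw [hM, Finset.erase_right_comm]
        exact Finset.erase_subset _ _
  have key : ∀ d : Bool, (F.filter fun f => f none = d).card * 128 ≤
      24 * 2 ^ (2 * K.card + 1) := by
    intro d
    let x : Bool → Fin 3 → K := fun b =>
      ![⟨s, hs⟩, ⟨t, ht⟩, if b = d then ⟨a, haK⟩ else ⟨c, hcK⟩]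
    have hxinj : ∀ b, Function.Injective (x b) := by
      intro b i j
      by_cases hb : b = d <;> fin_cases i <;> fin_cases j <;>
        simp [x, hb, hst, hst.symm, hat, hat.symm, has, has.symm, hct, hct.symm, hcs, hcs.symm]
    have h := card_mul_le_of_comp
      (Option.map fun i : Bool × Fin 3 => ((i.1, x i.1 i.2) : Bool × K))
      (Option.map_injective (by
        rintro ⟨b, i⟩ ⟨c, j⟩ h
        obtain ⟨rfl, h⟩ := Prod.mk.inj h
        exact Prod.ext rfl (hxinj _ h)))
      (sourceSinkConstraint d) (F.filter fun f => f none = d) fun f hf => by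
        obtain ⟨hfF, rfl⟩ := Finset.mem_filter.1 hf
        obtain ⟨R, hR⟩ := hF f hfF
        simp only [sourceSinkConstraint, Function.comp_apply, Bool.and_eq_true,
          decide_eq_true_eq, Option.map_some, Option.map_none]
        refine ⟨⟨⟨⟨trivial, fun b => ?_⟩, ?_⟩, ?_⟩, ?_⟩
        · exact hR.not_out_into hw hk b (hsource K subset_rfl hs) (hsink K subset_rfl ht)
        · have hx2 : x (!f none) 2 = ⟨c, hcK⟩ := by simp [x]
          rw [hx2]
          exact hR.not_through_edge hw hne hk ht hst hct
            (hsource _ (Finset.erase_subset _ _) (Finset.mem_erase.2 ⟨hst, hs⟩)) hterm'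
        · have hx2 : x (f none) 2 = ⟨a, haK⟩ := by simp [x]
          rw [hx2]
          exact hR.not_through_edge hw hne hk hs has hst.symm hinit'
            (hsink _ (Finset.erase_subset _ _) (Finset.mem_erase.2 ⟨hst.symm, ht⟩))
        · exact hR.not_through_edge hw hne hk haK has.symm hat.symm
            (hsource _ (Finset.erase_subset _ _) (Finset.mem_erase.2 ⟨has.symm, hs⟩))
            (hsink _ (Finset.erase_subset _ _) (Finset.mem_erase.2 ⟨hat.symm, ht⟩))
    rw [card_extCode_index, card_sourceSinkConstraint] at h
    exact h
  have hsplit := Finset.card_filter_add_card_filter_not (s := F) fun f => f none = true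
  simp only [Bool.not_eq_true] at hsplit
  have h1 := key true
  have h2 := key false
  omega

theorem card_extCode_le (hF : ∀ f ∈ F, ∃ R, IsExtCode K T w k f R)
    (hw : ∀ b, w b ∉ K) (hne : w false ≠ w true) (hk : K.card + 1 = k) (hk3 : 3 ≤ K.card)
    (hT : ∀ x ∈ K, ∀ y ∈ K, x ≠ y → (T x y ↔ ¬ T y x)) :
    F.card ≤ 6 * 2 ^ (2 * k - 5) := by
  have hpow : 2 ^ (2 * K.card + 1) = 16 * 2 ^ (2 * k - 5) := by
    rw [show 2 * K.card + 1 = 4 + (2 * k - 5) by omega, pow_add]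
    norm_num
  have hKne : K.Nonempty := Finset.card_pos.1 (by omega)
  have htot : ∀ x ∈ K, ∀ y ∈ K, x ≠ y → T x y ∨ T y x := fun x hx y hy hxy => by
    have := hT x hx y hy hxy
    tauto
  by_cases hs : ∃ s ∈ K, ∀ y ∈ K, y ≠ s → T s y
  · by_cases ht : ∃ t ∈ K, ∀ y ∈ K, y ≠ t → T y t
    · obtain ⟨s, hs, hs'⟩ := hs
      obtain ⟨t, ht, ht'⟩ := ht
      have := card_le_of_source_sink hF hw hne hk hk3 hT hs ht hs' ht'
      omega
    · obtain ⟨e, he, hterm⟩ := exists_three_terminal hKne hT fun t htK => by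
        by_contra! hcon
        exact ht ⟨t, htK, fun y hy hyt => (hT y hy t htK hyt).2 (hcon y hy hyt)⟩
      obtain ⟨y, hy, hinit⟩ := exists_initial hKne htot
      by_cases hrange : (⟨y, hy⟩ : K) ∈ Set.range e
      · obtain ⟨i, hi⟩ := hrange
        have := card_le_of_three_hubs hF hw hk he
          (fun j z hz => (show ReachIn T K (e j) y from by
            simpa [hi] using hterm i (e j) (e j).2).trans (hinit z hz)) hterm
        omega
      · have := card_le_of_three_terminal hF hw hk (x := Fin.cons ⟨y, hy⟩ e)
          (Fin.cons_injective_iff.2 ⟨hrange, he⟩) (by simpa using hterm) (by simpa using hinit)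
        omega
  · obtain ⟨e, he, hinit⟩ := exists_three_initial hKne hT fun s hsK => by
      by_contra! hcon
      exact hs ⟨s, hsK, fun y hy hys => (hT s hsK y hy hys.symm).2 (hcon y hy hys)⟩
    obtain ⟨y, hy, hterm⟩ := exists_terminal hKne htot
    by_cases hrange : (⟨y, hy⟩ : K) ∈ Set.range e
    · obtain ⟨i, hi⟩ := hrange
      have := card_le_of_three_hubs hF hw hk he hinit
        (fun j z hz => (hterm z hz).trans (show ReachIn T K y (e j) from by
          simpa [hi] using hinit i (e j) (e j).2))
      omega
    · have := card_le_of_three_initial hF hw hk (x := Fin.cons ⟨y, hy⟩ e)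
        (Fin.cons_injective_iff.2 ⟨hrange, he⟩) (by simpa using hinit) (by simpa using hterm)
      omega

end Core

/-- The relation on the ambient type induced by a relation on a subset. -/
def ambientRel {α : Type*} {A : Set α} (D : A → A → Prop) (a b : α) : Prop :=
  ∃ (ha : a ∈ A) (hb : b ∈ A), D ⟨a, ha⟩ ⟨b, hb⟩

/-- A clique with `k` vertices on which the orientation is strongly connected is a copy of a
member of `SFam k`. -/
theorem FreeOrient.not_strongOn {α : Type*} {G : SimpleGraph α} {A : Set α} {k : ℕ}
    {D : (G.induce A).Orient} (hD : FreeOrient (SFam k) D) {S : Finset α}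
    (hSA : ∀ x ∈ S, x ∈ A) (hS : G.IsClique (S : Set α)) (hcard : S.card = k) :
    ¬ StrongOn (ambientRel D.1) S := by
  intro hstrong
  let e : Fin k ≃ S := (S.equivFinOfCardEq hcard).symm
  let φ : Fin k → A := fun i => ⟨e i, hSA _ (e i).2⟩
  have hφ : Function.Injective φ := fun i j h =>
    e.injective (Subtype.ext (congrArg (fun a : A => (a : α)) h))
  let T : (⊤ : SimpleGraph (Fin k)).Orient := ⟨fun i j => D.1 (φ i) (φ j),
    fun i j h => by
      rintro rfl
      exact (D.2.1 _ _ h).ne rfl,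
    fun i j h => D.2.2 _ _ (hS (e i).2 (e j).2 fun h' =>
      h (e.injective (Subtype.ext h')))⟩
  refine hD k T ⟨rfl, fun i j => ?_⟩ ⟨φ, hφ, fun _ _ h => h⟩
  have hlift : ∀ x y, ReachIn (ambientRel D.1) S x y → ∀ (hx : x ∈ S) (hy : y ∈ S),
      Relation.ReflTransGen T.1 (e.symm ⟨x, hx⟩) (e.symm ⟨y, hy⟩) := by
    intro x y h hx
    induction h with
    | refl => exact fun _ => .refl
    | tail _ hbc ih =>
      intro hy
      refine (ih hbc.1).tail ?_
      obtain ⟨_, _, h⟩ := hbc.2.2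
      simpa [T, φ] using h
  simpa using hlift _ _ (hstrong _ (e i).2 _ (e j).2) (e i).2 (e j).2

/-- If `K` is a clique of `G` with `k - 1` vertices and `u, v ∉ K` are adjacent
vertices each adjacent to all vertices of `K`, then for any orientation `K⃗` of `K`
the number of ways to orient the edge `uv` and the edges between `{u, v}` and `K`
avoiding a strongly connected tournament on `k` vertices is at most `6 · 2^(2k-5)`. -/
theorem extEdge_le_of_clique {n : ℕ} (G : SimpleGraph (Fin n)) (k : ℕ) (hk : 4 ≤ k)
    (K : Finset (Fin n)) (hK : G.IsClique ↑K) (hcard : K.card = k - 1)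
    (u v : Fin n) (hu : u ∉ K) (hv : v ∉ K) (huv : G.Adj u v)
    (hadju : ∀ w ∈ K, G.Adj u w) (hadjv : ∀ w ∈ K, G.Adj v w)
    (T : (G.induce (↑K : Set (Fin n))).Orient) :
    extEdge G (SFam k) (↑K : Set (Fin n)) u v T ≤ 6 * 2 ^ (2 * k - 5) := by
  let A : Set (Fin n) := insert u (insert v ↑K)
  let w : Bool → Fin n := fun b => cond b v u
  have hwA : ∀ b, w b ∈ A := by
    intro b
    cases b <;> simp [w, A]
  have hKA : ∀ x ∈ K, x ∈ A := fun x hx => by simp [A, hx]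
  have hwK : ∀ b, w b ∉ K := by
    intro b
    cases b
    exacts [hu, hv]
  have hadj : ∀ b, ∀ x ∈ K, G.Adj (w b) x := by
    intro b
    cases b
    exacts [hadju, hadjv]
  have hA : G.IsClique A := by
    refine (hK.insert fun b hb _ => hadjv b hb).insert fun b hb _ => ?_
    rcases hb with rfl | hb
    exacts [huv, hadju b hb]
  let enc : (G.induce A).Orient → Option (Bool × K) → Bool := fun D o =>
    o.elim (decide (D.1 ⟨u, hwA false⟩ ⟨v, hwA true⟩))
      fun p => decide (D.1 ⟨w p.1, hwA p.1⟩ ⟨p.2, hKA _ p.2.2⟩)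
  have hflip : ∀ (D : (G.induce A).Orient) (a b : A), a ≠ b → (D.1 a b ↔ ¬ D.1 b a) :=
    fun D a b hab => D.2.2 a b (hA a.2 b.2 fun h => hab (Subtype.ext h))
  let X := {D : (G.induce A).Orient // FreeOrient (SFam k) D ∧
    ∀ (a b : Fin n) (ha : a ∈ (K : Set (Fin n))) (hb : b ∈ (K : Set (Fin n))),
      (D.1 ⟨a, Set.mem_insert_of_mem u (Set.mem_insert_of_mem v ha)⟩
        ⟨b, Set.mem_insert_of_mem u (Set.mem_insert_of_mem v hb)⟩ ↔
        T.1 ⟨a, ha⟩ ⟨b, hb⟩)}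
  have hinj : Function.Injective fun D : X => enc D.1 := by
    intro D D' h
    have huv' : D.1.1 ⟨u, hwA false⟩ ⟨v, hwA true⟩ ↔ D'.1.1 ⟨u, hwA false⟩ ⟨v, hwA true⟩ := by
      simpa [enc] using congrFun h none
    have hwx : ∀ b, ∀ x (hx : x ∈ K), D.1.1 ⟨w b, hwA b⟩ ⟨x, hKA x hx⟩ ↔
        D'.1.1 ⟨w b, hwA b⟩ ⟨x, hKA x hx⟩ := fun b x hx => by
      simpa [enc] using congrFun h (some (b, ⟨x, hx⟩))
    have hirr : ∀ (E : (G.induce A).Orient) a, ¬ E.1 a a := fun E a ha => (E.2.1 a a ha).ne rfl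
    have hsymm : ∀ a b, a ≠ b → (D.1.1 a b ↔ D'.1.1 a b) → (D.1.1 b a ↔ D'.1.1 b a) :=
      fun a b hab hiff => by rw [hflip D.1 b a hab.symm, hflip D'.1 b a hab.symm, hiff]
    have hne : ∀ b, ∀ x (hx : x ∈ K), (⟨w b, hwA b⟩ : A) ≠ ⟨x, hKA x hx⟩ := fun b x hx h =>
      (hadj b x hx).ne (Subtype.ext_iff.1 h)
    refine Subtype.ext (Subtype.ext ?_)
    funext a b
    obtain ⟨a, ha⟩ := a
    obtain ⟨b, hb⟩ := b
    apply propext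
    have huvne : (⟨u, hwA false⟩ : A) ≠ ⟨v, hwA true⟩ := fun h => huv.ne (Subtype.ext_iff.1 h)
    have hcases : ∀ c ∈ A, (∃ i, c = w i) ∨ c ∈ K := by
      rintro c (rfl | rfl | hc)
      exacts [.inl ⟨false, rfl⟩, .inl ⟨true, rfl⟩, .inr hc]
    rcases hcases a ha with ⟨i, rfl⟩ | haK <;> rcases hcases b hb with ⟨j, rfl⟩ | hbK
    · cases i <;> cases j
      · exact iff_of_false (hirr _ _) (hirr _ _)
      · exact huv'
      · exact hsymm _ _ huvne huv'
      · exact iff_of_false (hirr _ _) (hirr _ _)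
    · exact hwx i b hbK
    · exact hsymm _ _ (hne j a haK) (hwx j a haK)
    · exact (D.2.2 a b haK hbK).trans (D'.2.2 a b haK hbK).symm
  have : Fintype X := Fintype.ofInjective _ hinj
  have hX : extEdge G (SFam k) (↑K : Set (Fin n)) u v T =
      (Finset.univ.image fun D : X => enc D.1).card := by
    rw [Finset.card_image_of_injective _ hinj, Finset.card_univ, ← Nat.card_eq_fintype_card]
    rfl
  rw [hX]
  refine card_extCode_le (K := K) (T := ambientRel T.1) (w := w) (fun f hf => ?_) hwK huv.ne
    (by omega) (by omega) ?_
  · obtain ⟨D, -, rfl⟩ := Finset.mem_image.1 hf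
    refine ⟨ambientRel D.1.1, ⟨?_, ?_, ?_, ?_, ?_⟩⟩
    · rintro x hx y hy ⟨hx', hy', h⟩
      exact ⟨hKA x hx, hKA y hy, (D.2.2 x y hx hy).2 h⟩
    · intro b x h
      exact ⟨hwA b, hKA _ x.2, by simpa [enc] using h⟩
    · intro b x h
      refine ⟨hKA _ x.2, hwA b, (hflip D.1 _ _ fun h' => ?_).2 (by simpa [enc] using h)⟩
      exact (hadj b x x.2).ne (Subtype.ext_iff.1 h').symm
    · by_cases h : D.1.1 ⟨u, hwA false⟩ ⟨v, hwA true⟩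
      · have h' : enc D.1 none = true := by simpa [enc] using h
        rw [h']
        exact ⟨hwA false, hwA true, h⟩
      · have h' : enc D.1 none = false := by simpa [enc] using h
        rw [h']
        exact ⟨hwA true, hwA false, (hflip D.1 _ _ fun h' =>
          huv.ne (Subtype.ext_iff.1 h').symm).2 h⟩
    · intro S hS hSk
      have hSA : ∀ x ∈ S, x ∈ A := fun x hx => by simpa [A, w] using hS hx
      exact D.2.1.not_strongOn hSA (hA.subset hSA) hSk
  · intro x hx y hy hxy
    have h := T.2.2 ⟨x, hx⟩ ⟨y, hy⟩ (hK hx hy hxy)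
    exact ⟨fun ⟨_, _, h1⟩ ⟨_, _, h2⟩ => h.1 h1 h2,
      fun h1 => ⟨hx, hy, h.2 fun h2 => h1 ⟨hy, hx, h2⟩⟩⟩
end
end

section
/- Let k ≥ 5 be an integer. Then the number SC(K_k) of strongly connected orientations of the complete graph K_k satisfies SC(K_k) > 2^{C(k,2) − 1}, where C(k,2) = k(k−1)/2; that is, more than half of all orientations of K_k are strongly connected. -/
open scoped Classical

noncomputable section

universe u

variable {V : Type u}

/-- The relation on `Fin (k + 1)` obtained from `D` by adding a vertex `0` whose
out-neighbourhood is `A` and whose in-neighbourhood is the complement of `A`. -/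
def coneRel {k : ℕ} (D : Fin k → Fin k → Prop) (A : Set (Fin k)) (u v : Fin (k + 1)) : Prop :=
  Fin.cases (motive := fun _ => Prop)
    (Fin.cases (motive := fun _ => Prop) False (fun j => j ∈ A) v)
    (fun i => Fin.cases (motive := fun _ => Prop) (i ∉ A) (fun j => D i j) v) u

section coneRel

variable {k : ℕ} (D : Fin k → Fin k → Prop) (A : Set (Fin k)) (i j : Fin k)

@[simp] lemma coneRel_zero_zero : coneRel D A 0 0 ↔ False := Iff.rfl

@[simp] lemma coneRel_zero_succ : coneRel D A 0 j.succ ↔ j ∈ A := Iff.rfl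

@[simp] lemma coneRel_succ_zero : coneRel D A i.succ 0 ↔ i ∉ A := Iff.rfl

@[simp] lemma coneRel_succ_succ : coneRel D A i.succ j.succ ↔ D i j := Iff.rfl

end coneRel

/-- A tournament on `k + 1` vertices is a tournament on `k` vertices together with the
out-neighbourhood of one further vertex. -/
def coneEquiv (k : ℕ) :
    (⊤ : SimpleGraph (Fin k)).Orient × Set (Fin k) ≃ (⊤ : SimpleGraph (Fin (k + 1))).Orient where
  toFun p := ⟨coneRel p.1.1 p.2, by
    obtain ⟨⟨D, hD, hD'⟩, A⟩ := p
    constructor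
    · intro u v
      cases u using Fin.cases <;> cases v using Fin.cases
      · simp
      · simp [Fin.succ_ne_zero, eq_comm]
      · simp [Fin.succ_ne_zero]
      · simpa using hD _ _
    · intro u v
      cases u using Fin.cases <;> cases v using Fin.cases
      · simp
      · simp
      · simp
      · simpa using hD' _ _⟩
  invFun E := (⟨fun i j => E.1 i.succ j.succ,
    fun i j h => by simpa using E.2.1 _ _ h,
    fun i j h => E.2.2 _ _ (by simpa using h)⟩, {j | E.1 0 j.succ})
  left_inv p := rfl
  right_inv E := by
    obtain ⟨E, hE, hE'⟩ := E
    apply Subtype.ext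
    funext u v
    refine propext ?_
    cases u using Fin.cases <;> cases v using Fin.cases
    · simpa using fun h => hE 0 0 h
    · simp
    · simpa using (hE' _ _ (by simp [Fin.succ_ne_zero])).symm
    · simp

lemma card_orient_top (k : ℕ) :
    Nat.card (⊤ : SimpleGraph (Fin k)).Orient = 2 ^ k.choose 2 := by
  induction k with
  | zero =>
    have : Unique (⊤ : SimpleGraph (Fin 0)).Orient :=
      { default := ⟨fun _ _ => False, fun u => u.elim0, fun u => u.elim0⟩
        uniq := fun D => Subtype.ext (funext fun u => u.elim0) }
    simp
  | succ k ih =>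
    rw [← Nat.card_congr (coneEquiv k), Nat.card_prod, ih, Nat.choose_succ_succ' k 1,
      Nat.choose_one_right, pow_add, mul_comm]
    simp [Nat.card_eq_fintype_card, Fintype.card_set]

lemma reflTransGen_total {k : ℕ} (T : (⊤ : SimpleGraph (Fin k)).Orient) (u v : Fin k) :
    Relation.ReflTransGen T.1 u v ∨ Relation.ReflTransGen T.1 v u := by
  by_cases h : u = v
  · exact Or.inl (h ▸ .refl)
  · by_cases huv : T.1 u v
    · exact Or.inl (.single huv)
    · exact Or.inr (.single ((T.2.2 v u (by simpa using Ne.symm h)).2 huv))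

/-- Every nonempty finite tournament has a vertex from which all vertices are reachable. -/
lemma exists_forall_reachable_from {k : ℕ} [NeZero k] (T : (⊤ : SimpleGraph (Fin k)).Orient) :
    ∃ a, ∀ v, Relation.ReflTransGen T.1 a v := by
  have hdir : Directed (fun u v => Relation.ReflTransGen T.1 v u) (id : Fin k → Fin k) := by
    intro u v
    rcases reflTransGen_total T u v with h | h
    · exact ⟨u, .refl, h⟩
    · exact ⟨v, h, .refl⟩
  have : IsTrans (Fin k) fun u v => Relation.ReflTransGen T.1 v u := ⟨fun _ _ _ h h' => h'.trans h⟩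
  obtain ⟨a, ha⟩ := hdir.finset_le Finset.univ
  exact ⟨a, fun v => ha v (Finset.mem_univ v)⟩

/-- Every nonempty finite tournament has a vertex reachable from all vertices. -/
lemma exists_forall_reachable_to {k : ℕ} [NeZero k] (T : (⊤ : SimpleGraph (Fin k)).Orient) :
    ∃ b, ∀ v, Relation.ReflTransGen T.1 v b := by
  have hdir : Directed (Relation.ReflTransGen T.1) (id : Fin k → Fin k) := by
    intro u v
    rcases reflTransGen_total T u v with h | h
    · exact ⟨v, h, .refl⟩
    · exact ⟨u, .refl, h⟩
  obtain ⟨b, hb⟩ := hdir.finset_le Finset.univ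
  exact ⟨b, fun v => hb v (Finset.mem_univ v)⟩

/-- Adding a vertex with an edge to `a`, from which everything is reachable, and an edge
from `b`, which is reachable from everything, gives a strongly connected tournament. -/
lemma isStrongTourn_coneEquiv {k : ℕ} {T : (⊤ : SimpleGraph (Fin k)).Orient} {A : Set (Fin k)}
    {a b : Fin k} (ha : ∀ v, Relation.ReflTransGen T.1 a v)
    (hb : ∀ v, Relation.ReflTransGen T.1 v b) (haA : a ∈ A) (hbA : b ∉ A) :
    IsStrongTourn (coneEquiv k (T, A)) := by
  have lift : ∀ u v, Relation.ReflTransGen T.1 u v →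
      Relation.ReflTransGen (coneEquiv k (T, A)).1 u.succ v.succ :=
    fun u v h => h.lift Fin.succ fun _ _ h => h
  have from_zero : ∀ v, Relation.ReflTransGen (coneEquiv k (T, A)).1 0 v := by
    intro v
    cases v using Fin.cases with
    | zero => exact .refl
    | succ v => exact .head (b := a.succ) (show coneRel T.1 A 0 a.succ from haA) (lift _ _ (ha v))
  have to_zero : ∀ v, Relation.ReflTransGen (coneEquiv k (T, A)).1 v 0 := by
    intro v
    cases v using Fin.cases with
    | zero => exact .refl
    | succ v => exact .tail (lift _ _ (hb v)) (show coneRel T.1 A b.succ 0 from hbA)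
  exact fun u v => (to_zero u).trans (from_zero v)

lemma two_pow_le_card_set_mem_notMem {k : ℕ} {a b : Fin k} (hab : a ≠ b) :
    2 ^ k ≤ 4 * Nat.card {A : Set (Fin k) // a ∈ A ∧ b ∉ A} := by
  let f : Set (Fin k) → {A : Set (Fin k) // a ∈ A ∧ b ∉ A} × Prop × Prop :=
    fun A => (⟨insert a A \ {b}, by simp [hab], by simp⟩, a ∈ A, b ∈ A)
  have hf : Function.Injective f := by
    intro A B h
    simp only [f, Prod.mk.injEq, Subtype.mk.injEq, eq_iff_iff] at h
    obtain ⟨h, ha, hb⟩ := h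
    ext x
    by_cases hxa : x = a
    · rw [hxa, ha]
    by_cases hxb : x = b
    · rw [hxb, hb]
    simpa [hxa, hxb] using Set.ext_iff.1 h x
  have := Nat.card_le_card_of_injective f hf
  simp only [Nat.card_prod, Nat.card_eq_fintype_card (α := Prop), Fintype.card_prop,
    Nat.card_eq_fintype_card (α := Set (Fin k)), Fintype.card_set, Fintype.card_fin] at this
  omega

/-- A strongly connected tournament on `k` vertices has at least `2 ^ k - 2` strongly
connected one-vertex extensions. -/
lemma le_card_cone_of_isStrongTourn {k : ℕ} {T : (⊤ : SimpleGraph (Fin k)).Orient}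
    (hT : IsStrongTourn T) :
    2 ^ k ≤ Nat.card {A : Set (Fin k) // IsStrongTourn (coneEquiv k (T, A))} + 2 := by
  have hsub : (Set.univ : Set (Set (Fin k))) ⊆
      {A | IsStrongTourn (coneEquiv k (T, A))} ∪ {∅, Set.univ} := by
    intro A _
    by_cases h : A = ∅ ∨ A = Set.univ
    · exact Or.inr h
    · push Not at h
      obtain ⟨a, ha⟩ := h.1
      obtain ⟨b, hb⟩ := (Set.ne_univ_iff_exists_notMem A).1 h.2
      exact Or.inl (isStrongTourn_coneEquiv (fun v => hT a v) (fun v => hT v b) ha hb)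
  calc 2 ^ k = (Set.univ : Set (Set (Fin k))).ncard := by
        simp [Set.ncard_univ, Nat.card_eq_fintype_card, Fintype.card_set]
    _ ≤ _ := Set.ncard_le_ncard hsub (Set.toFinite _)
    _ ≤ _ := Set.ncard_union_le _ _
    _ ≤ _ := Nat.add_le_add_left ((Set.ncard_insert_le _ _).trans (by simp)) _

/-- A tournament on `k` vertices that is not strongly connected has at least `2 ^ k / 4`
strongly connected one-vertex extensions. -/
lemma le_card_cone_of_not_isStrongTourn {k : ℕ} [NeZero k]
    {T : (⊤ : SimpleGraph (Fin k)).Orient} (hT : ¬ IsStrongTourn T) :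
    2 ^ k ≤ 4 * Nat.card {A : Set (Fin k) // IsStrongTourn (coneEquiv k (T, A))} := by
  obtain ⟨a, ha⟩ := exists_forall_reachable_from T
  obtain ⟨b, hb⟩ := exists_forall_reachable_to T
  have hab : a ≠ b := by
    rintro rfl
    exact hT fun u v => (hb u).trans (ha v)
  refine (two_pow_le_card_set_mem_notMem hab).trans ?_
  exact Nat.mul_le_mul_left 4 (Nat.card_le_card_of_injective _
    (Subtype.impEmbedding _ _ fun A hA => isStrongTourn_coneEquiv ha hb hA.1 hA.2).injective)

lemma card_strong_succ (k : ℕ) :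
    Nat.card {D : (⊤ : SimpleGraph (Fin (k + 1))).Orient // IsStrongTourn D} =
      ∑ T : (⊤ : SimpleGraph (Fin k)).Orient,
        Nat.card {A : Set (Fin k) // IsStrongTourn (coneEquiv k (T, A))} := by
  rw [← Nat.card_sigma]
  refine Nat.card_congr (((coneEquiv k).subtypeEquivOfSubtype).symm.trans ?_)
  exact
    { toFun := fun p => ⟨p.1.1, p.1.2, p.2⟩
      invFun := fun q => ⟨(q.1, q.2.1), q.2.2⟩
      left_inv := fun _ => rfl
      right_inv := fun _ => rfl }

lemma card_strong_succ_ge (k : ℕ) [NeZero k] :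
    2 ^ k * (4 * Nat.card {D : (⊤ : SimpleGraph (Fin k)).Orient // IsStrongTourn D} +
        Nat.card {D : (⊤ : SimpleGraph (Fin k)).Orient // ¬ IsStrongTourn D}) ≤
      4 * Nat.card {D : (⊤ : SimpleGraph (Fin (k + 1))).Orient // IsStrongTourn D} +
        8 * Nat.card {D : (⊤ : SimpleGraph (Fin k)).Orient // IsStrongTourn D} := by
  have key : ∀ T : (⊤ : SimpleGraph (Fin k)).Orient,
      2 ^ k * (4 * (if IsStrongTourn T then 1 else 0) + if ¬ IsStrongTourn T then 1 else 0) ≤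
        4 * Nat.card {A : Set (Fin k) // IsStrongTourn (coneEquiv k (T, A))} +
          8 * if IsStrongTourn T then 1 else 0 := by
    intro T
    by_cases hT : IsStrongTourn T
    · have := le_card_cone_of_isStrongTourn hT
      simp only [hT, if_true, not_true, if_false]
      omega
    · have := le_card_cone_of_not_isStrongTourn hT
      simp only [hT, if_true, not_false_iff, if_false]
      omega
  have hsum := Finset.sum_le_sum fun T (_ : T ∈ Finset.univ) => key T
  simp only [← Finset.mul_sum, Finset.sum_add_distrib, Finset.sum_boole] at hsum
  rw [card_strong_succ]
  simpa [Nat.card_eq_fintype_card, Fintype.card_subtype] using hsum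

/-- The edge relation of the `n`-th tournament on the vertices `0, ..., 4`: the edge between
`i < j` points to `j` if and only if bit `j * (j - 1) / 2 + i` of `n` is set. -/
def bitAdj (n i j : ℕ) : Bool :=
  bif i.blt j then n.testBit (j * (j - 1) / 2 + i)
  else bif j.blt i then !n.testBit (i * (i - 1) / 2 + j) else false

/-- There is a walk of length at most two from `i` to `j` in the tournament `bitAdj n`. -/
def bitReachTwo (n i j : ℕ) : Bool :=
  i.beq j || bitAdj n i j || [0, 1, 2, 3, 4].any fun w => bitAdj n i w && bitAdj n w j

/-- There is a walk of length at most four from `i` to `j` in the tournament `bitAdj n`. -/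
def bitReachFour (n i j : ℕ) : Bool :=
  [0, 1, 2, 3, 4].any fun w => bitReachTwo n i w && bitReachTwo n w j

/-- All vertices are reachable from `0` and reach `0` in the tournament `bitAdj n`. -/
def bitStrong (n : ℕ) : Bool :=
  [1, 2, 3, 4].all fun v => bitReachFour n 0 v && bitReachFour n v 0

/-- The number of `k < 2 ^ d` such that `p (n + k)` holds, computed by bisection to keep the
recursion shallow. -/
def bisectCount (p : ℕ → Bool) : ℕ → ℕ → ℕ
  | 0, n => (p n).toNat
  | d + 1, n => bisectCount p d n + bisectCount p d (n + 2 ^ d)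

lemma bisectCount_eq_count (p : ℕ → Bool) (d n : ℕ) :
    bisectCount p d n = Nat.count (fun k => p (n + k) = true) (2 ^ d) := by
  induction d generalizing n with
  | zero =>
    rw [pow_zero, ← zero_add 1, Nat.count_succ]
    cases h : p n <;> simp [bisectCount, h]
  | succ d ih => simp only [bisectCount, ih, pow_succ, mul_two, Nat.count_add, add_assoc]

lemma count_bitStrong : 512 < Nat.count (fun n => bitStrong n = true) 1024 := by
  have h : 512 < bisectCount bitStrong 10 0 := by decide +kernel
  simpa [bisectCount_eq_count] using h

/-- The tournament on `Fin 5` with edge relation `bitAdj n`. -/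
def bitOrient (n : ℕ) : (⊤ : SimpleGraph (Fin 5)).Orient :=
  ⟨fun i j => bitAdj n i j = true, by
    constructor
    · rintro u v h rfl
      simp [bitAdj, Nat.blt] at h
    · intro u v huv
      have hne : (u : ℕ) ≠ v := fun h => huv (Fin.ext h)
      rcases lt_or_gt_of_ne hne with h | h
      · simp [bitAdj, Nat.blt, h, (show u < v from h).not_gt]
      · simp [bitAdj, Nat.blt, h, (show v < u from h).not_gt]⟩

lemma bitOrient_injOn : Set.InjOn bitOrient (Set.Iio 1024) := by
  intro m hm n hn h
  have hadj : ∀ i j : Fin 5, bitAdj m i j = bitAdj n i j := fun i j =>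
    Bool.eq_iff_iff.2 (iff_of_eq (congrFun (congrFun (congrArg Subtype.val h) i) j))
  apply Nat.eq_of_testBit_eq
  intro b
  by_cases hb : b < 10
  · interval_cases b
    · exact hadj 0 1
    · exact hadj 0 2
    · exact hadj 1 2
    · exact hadj 0 3
    · exact hadj 1 3
    · exact hadj 2 3
    · exact hadj 0 4
    · exact hadj 1 4
    · exact hadj 2 4
    · exact hadj 3 4
  · have hpow : 1024 ≤ 2 ^ b := Nat.pow_le_pow_right (n := 2) (by simp) (not_lt.1 hb)
    rw [Nat.testBit_lt_two_pow (lt_of_lt_of_le hm hpow),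
      Nat.testBit_lt_two_pow (lt_of_lt_of_le hn hpow)]

lemma any_vertex_iff (p : ℕ → Bool) :
    [0, 1, 2, 3, 4].any p = true ↔ ∃ w : Fin 5, p w = true := by
  simp [Fin.exists_fin_succ]

lemma reflTransGen_of_bitReachTwo {n : ℕ} {i j : Fin 5} (h : bitReachTwo n i j = true) :
    Relation.ReflTransGen (bitOrient n).1 i j := by
  rw [bitReachTwo, Bool.or_eq_true, Bool.or_eq_true, any_vertex_iff] at h
  rcases h with (h | h) | ⟨w, hw⟩
  · rw [Fin.ext (Nat.eq_of_beq_eq_true h)]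
  · exact .single h
  · rw [Bool.and_eq_true] at hw
    exact .tail (.single hw.1) hw.2

lemma reflTransGen_of_bitReachFour {n : ℕ} {i j : Fin 5} (h : bitReachFour n i j = true) :
    Relation.ReflTransGen (bitOrient n).1 i j := by
  rw [bitReachFour, any_vertex_iff] at h
  obtain ⟨w, hw⟩ := h
  rw [Bool.and_eq_true] at hw
  exact (reflTransGen_of_bitReachTwo hw.1).trans (reflTransGen_of_bitReachTwo hw.2)

lemma isStrongTourn_bitOrient {n : ℕ} (h : bitStrong n = true) : IsStrongTourn (bitOrient n) := by
  have hzero : ∀ v : Fin 5, Relation.ReflTransGen (bitOrient n).1 0 v ∧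
      Relation.ReflTransGen (bitOrient n).1 v 0 := by
    intro v
    by_cases hv : v = 0
    · rw [hv]
      exact ⟨.refl, .refl⟩
    · have hmem : (v : ℕ) ∈ [1, 2, 3, 4] := by
        revert v
        decide
      have := List.all_eq_true.1 h v hmem
      rw [Bool.and_eq_true] at this
      exact ⟨reflTransGen_of_bitReachFour this.1, reflTransGen_of_bitReachFour this.2⟩
  exact fun u v => (hzero u).2.trans (hzero v).1

lemma card_strong_five :
    512 < Nat.card {D : (⊤ : SimpleGraph (Fin 5)).Orient // IsStrongTourn D} := by
  refine count_bitStrong.trans_le ?_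
  rw [Nat.count_eq_card_filter_range, Nat.card_eq_fintype_card, Fintype.card_subtype]
  refine Finset.card_le_card_of_injOn bitOrient (fun n hn => ?_) (bitOrient_injOn.mono ?_)
  · simp only [Finset.coe_filter, Set.mem_ofPred_eq] at hn
    simpa using isStrongTourn_bitOrient hn.2
  · intro n hn
    simp only [Finset.coe_filter, Finset.mem_range, Set.mem_ofPred_eq] at hn
    exact hn.1

lemma card_strong_add_card_not_strong (k : ℕ) :
    Nat.card {D : (⊤ : SimpleGraph (Fin k)).Orient // IsStrongTourn D} +
      Nat.card {D : (⊤ : SimpleGraph (Fin k)).Orient // ¬ IsStrongTourn D} = 2 ^ k.choose 2 := by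
  rw [← card_orient_top, ← Nat.card_sum]
  exact Nat.card_congr (Equiv.sumCompl _)

lemma two_pow_lt_two_mul_card_strong {k : ℕ} (hk : 5 ≤ k) :
    2 ^ k.choose 2 <
      2 * Nat.card {D : (⊤ : SimpleGraph (Fin k)).Orient // IsStrongTourn D} := by
  induction k, hk using Nat.le_induction with
  | base =>
    have := card_strong_five
    simp only [Nat.choose]
    omega
  | succ k hk ih =>
    have : NeZero k := ⟨by omega⟩
    have hge := card_strong_succ_ge k
    have hadd := card_strong_add_card_not_strong k
    have hpow : 2 ^ 5 ≤ 2 ^ k := Nat.pow_le_pow_right (by simp) hk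
    rw [Nat.choose_succ_succ' k 1, Nat.choose_one_right, pow_add]
    generalize Nat.card {D : (⊤ : SimpleGraph (Fin k)).Orient // IsStrongTourn D} = s at *
    generalize Nat.card {D : (⊤ : SimpleGraph (Fin k)).Orient // ¬ IsStrongTourn D} = t at *
    rw [← hadd] at ih ⊢
    nlinarith [Nat.mul_le_mul_right s hpow, Nat.mul_lt_mul_of_pos_left ih (show 0 < 2 ^ k by simp)]

/-- For `k ≥ 5`, more than half of all orientations of the complete graph `K_k` are
strongly connected: `SC(K_k) > 2 ^ (C(k,2) - 1)`. -/
theorem two_pow_lt_card_strong_orientations (k : ℕ) (hk : 5 ≤ k) :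
    2 ^ (k.choose 2 - 1) <
      Nat.card {D : (⊤ : SimpleGraph (Fin k)).Orient // IsStrongTourn D} := by
  have h := two_pow_lt_two_mul_card_strong hk
  have hpos : 0 < k.choose 2 := Nat.choose_pos (by omega)
  have hsplit : 2 ^ k.choose 2 = 2 * 2 ^ (k.choose 2 - 1) := by
    rw [← pow_succ', Nat.sub_add_cancel hpos]
  omega
end
end

section
/- For every integer k ≥ 5, the number of 𝓢_k-free orientations of the complete graph K_k satisfies S_k(K_k) < 2^{t_{k-1}(k)}. -/
open scoped Classical

noncomputable section

universe u

variable {V : Type u}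

theorem FreeOrient.not_isStrongTourn {k : ℕ} {T : (⊤ : SimpleGraph (Fin k)).Orient}
    (h : FreeOrient (SFam k) T) : ¬ IsStrongTourn T :=
  fun hT => h k T ⟨rfl, hT⟩ ⟨id, Function.injective_id, fun _ _ h => h⟩

/-- The tournaments on `n` vertices that are not strongly connected. -/
def weakTourn (n : ℕ) : Finset ((⊤ : SimpleGraph (Fin n)).Orient) :=
  Finset.univ.filter fun T => ¬ IsStrongTourn T

theorem numOrient_top_le_card_weakTourn (k : ℕ) :
    numOrient (⊤ : SimpleGraph (Fin k)) (SFam k) ≤ (weakTourn k).card := by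
  rw [numOrient, Nat.card_eq_fintype_card, Fintype.card_subtype]
  exact Finset.card_le_card fun T hT => by
    simpa [weakTourn] using (Finset.mem_filter.1 hT).2.not_isStrongTourn

namespace SimpleGraph.Orient

variable {n : ℕ}

theorem not_loop (T : (⊤ : SimpleGraph (Fin n)).Orient) (u : Fin n) : ¬ T.1 u u :=
  fun h => (T.2.1 u u h).ne rfl

theorem iff_not_swap (T : (⊤ : SimpleGraph (Fin n)).Orient) {u v : Fin n} (h : u ≠ v) :
    T.1 u v ↔ ¬ T.1 v u :=
  T.2.2 u v h

theorem total (T : (⊤ : SimpleGraph (Fin n)).Orient) {u v : Fin n} (h : u ≠ v) :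
    T.1 u v ∨ T.1 v u := by
  have := T.iff_not_swap h
  tauto

/-- Some vertex of a nonempty tournament reaches every vertex. -/
theorem exists_reaches_all [NeZero n] (T : (⊤ : SimpleGraph (Fin n)).Orient) :
    ∃ a, ∀ v, Relation.ReflTransGen T.1 a v := by
  have : IsTrans (Fin n) fun u v => Relation.ReflTransGen T.1 v u :=
    ⟨fun _ _ _ h₁ h₂ => h₂.trans h₁⟩
  have hdir : Directed (fun u v => Relation.ReflTransGen T.1 v u) (id : Fin n → Fin n) := by
    intro u v
    rcases eq_or_ne u v with rfl | h
    · exact ⟨u, .refl, .refl⟩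
    · rcases T.total h with h | h
      · exact ⟨u, .refl, .single h⟩
      · exact ⟨v, .single h, .refl⟩
  exact hdir.finite_le id

/-- Some vertex of a nonempty tournament is reached by every vertex. -/
theorem exists_reached_by_all [NeZero n] (T : (⊤ : SimpleGraph (Fin n)).Orient) :
    ∃ b, ∀ v, Relation.ReflTransGen T.1 v b := by
  have hdir : Directed (Relation.ReflTransGen T.1) (id : Fin n → Fin n) := by
    intro u v
    rcases eq_or_ne u v with rfl | h
    · exact ⟨u, .refl, .refl⟩
    · rcases T.total h with h | h
      · exact ⟨v, .single h, .refl⟩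
      · exact ⟨u, .refl, .single h⟩
  exact hdir.finite_le id

/-- Deleting the vertex `0` of a tournament. -/
def deleteZero (T : (⊤ : SimpleGraph (Fin (n + 1))).Orient) :
    (⊤ : SimpleGraph (Fin n)).Orient :=
  ⟨fun i j => T.1 i.succ j.succ,
    fun i j h => fun hij => T.not_loop i.succ (by rwa [← hij] at h),
    fun i j h => T.iff_not_swap (by simpa using h)⟩

theorem eq_of_deleteZero_eq {S T : (⊤ : SimpleGraph (Fin (n + 1))).Orient}
    (h : S.deleteZero = T.deleteZero) (h₀ : ∀ i : Fin n, S.1 0 i.succ ↔ T.1 0 i.succ) :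
    S = T := by
  apply Subtype.ext
  funext u v
  apply propext
  induction u using Fin.cases with
  | zero =>
    induction v using Fin.cases with
    | zero => simp [not_loop]
    | succ j => exact h₀ j
  | succ i =>
    induction v using Fin.cases with
    | zero =>
      rw [S.iff_not_swap (Fin.succ_ne_zero i), T.iff_not_swap (Fin.succ_ne_zero i), h₀]
    | succ j => exact iff_of_eq (congrFun (congrFun (congrArg Subtype.val h) i) j)

theorem reaches_of_deleteZero {T : (⊤ : SimpleGraph (Fin (n + 1))).Orient} {i j : Fin n}
    (h : Relation.ReflTransGen T.deleteZero.1 i j) :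
    Relation.ReflTransGen T.1 i.succ j.succ :=
  h.lift Fin.succ fun _ _ h => h

/-- A tournament is strongly connected if `0` beats a vertex that reaches all other vertices
and is beaten by a vertex that all other vertices reach. -/
theorem isStrongTourn_of_deleteZero {T : (⊤ : SimpleGraph (Fin (n + 1))).Orient} {a b : Fin n}
    (ha : ∀ v, Relation.ReflTransGen T.deleteZero.1 a v)
    (hb : ∀ v, Relation.ReflTransGen T.deleteZero.1 v b)
    (h0a : T.1 0 a.succ) (hb0 : T.1 b.succ 0) : IsStrongTourn T := by
  have from_zero : ∀ v, Relation.ReflTransGen T.1 0 v := by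
    intro v
    induction v using Fin.cases with
    | zero => exact .refl
    | succ j => exact .head h0a (reaches_of_deleteZero (ha j))
  have to_zero : ∀ v, Relation.ReflTransGen T.1 v 0 := by
    intro v
    induction v using Fin.cases with
    | zero => exact .refl
    | succ j => exact .tail (reaches_of_deleteZero (hb j)) hb0
  exact fun u v => (to_zero u).trans (from_zero v)

/-- The tournaments that restrict to `T` on the nonzero vertices are determined by the
out-neighbourhood of `0`. -/
theorem card_filter_deleteZero_eq_le (s : Finset ((⊤ : SimpleGraph (Fin (n + 1))).Orient))
    (T : (⊤ : SimpleGraph (Fin n)).Orient) (X : Finset (Fin n → Prop))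
    (hX : ∀ S ∈ s, S.deleteZero = T → (fun i : Fin n => S.1 0 i.succ) ∈ X) :
    (s.filter fun S => S.deleteZero = T).card ≤ X.card := by
  refine Finset.card_le_card_of_injOn (fun S i => S.1 0 (Fin.succ i)) ?_ ?_
  · intro S hS
    obtain ⟨hS, hT⟩ := Finset.mem_filter.1 hS
    exact hX S hS hT
  · intro S hS S' hS' h
    refine eq_of_deleteZero_eq ?_ fun i => iff_of_eq (congrFun h i)
    rw [(Finset.mem_filter.1 hS).2, (Finset.mem_filter.1 hS').2]

end SimpleGraph.Orient

open SimpleGraph.Orient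

theorem card_orient_top_le (n : ℕ) :
    Fintype.card ((⊤ : SimpleGraph (Fin n)).Orient) ≤ 2 ^ n.choose 2 := by
  induction n with
  | zero =>
    refine Fintype.card_le_one_iff.2 fun S T => Subtype.ext ?_
    funext u
    exact u.elim0
  | succ n ih =>
    have h := Finset.card_le_mul_card_image_of_maps_to
      (s := (Finset.univ : Finset ((⊤ : SimpleGraph (Fin (n + 1))).Orient)))
      (t := Finset.univ) (f := deleteZero) (fun _ _ => Finset.mem_univ _) (2 ^ n)
      (fun T _ => (card_filter_deleteZero_eq_le _ T Finset.univ
        fun _ _ _ => Finset.mem_univ _).trans (by simp))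
    rw [Finset.card_univ, Finset.card_univ] at h
    calc _ ≤ _ := h
      _ ≤ 2 ^ n * 2 ^ n.choose 2 := Nat.mul_le_mul_left _ ih
      _ = 2 ^ (n + 1).choose 2 := by
        rw [← pow_add, Nat.choose_succ_succ' n 1, Nat.choose_one_right]

/-- At most three quarters of all subsets avoid the pattern `a ∈ x`, `b ∉ x`. -/
theorem four_mul_card_filter_not_and_le {n : ℕ} {a b : Fin n} (hab : a ≠ b) :
    4 * (Finset.univ.filter fun x : Fin n → Prop => ¬ (x a ∧ ¬ x b)).card ≤ 3 * 2 ^ n := by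
  have hsum := Finset.card_filter_add_card_filter_not (s := (Finset.univ : Finset (Fin n → Prop)))
    (fun x => x a ∧ ¬ x b)
  have hsurj := Fintype.card_le_of_surjective
    (fun y : {x : Fin n → Prop // x a ∧ ¬ x b} × Prop × Prop =>
      Function.update (Function.update y.1.1 a y.2.1) b y.2.2) (by
    intro x
    refine ⟨⟨⟨Function.update (Function.update x a True) b False, ?_⟩, x a, x b⟩, ?_⟩
    · simp [Function.update_of_ne hab]
    · funext i
      by_cases hb : i = b
      · simp [hb]
      · by_cases ha : i = a <;> simp [ha, hb, hab])
  rw [Fintype.card_prod, Fintype.card_prod, Fintype.card_subtype] at hsurj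
  simp only [Finset.card_univ, Fintype.card_pi_const, Fintype.card_prop] at hsum hsurj
  omega

/-- Adding a vertex keeps at most three quarters of the extensions of a tournament that is not
strongly connected, and at most two extensions of a strongly connected one, not strongly
connected. -/
theorem four_mul_card_weakTourn_succ_le (n : ℕ) (hn : 2 ≤ n) :
    4 * (weakTourn (n + 1)).card ≤ 3 * 2 ^ n * (weakTourn n).card + 8 * 2 ^ n.choose 2 := by
  have : NeZero n := ⟨by omega⟩
  have hpow : 2 ^ n = 4 * 2 ^ (n - 2) := by
    obtain ⟨m, rfl⟩ := Nat.exists_eq_add_of_le hn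
    rw [Nat.add_sub_cancel_left, pow_add]
    norm_num
  have hweak : ((weakTourn (n + 1)).filter fun S => ¬ IsStrongTourn S.deleteZero).card ≤
      3 * 2 ^ (n - 2) * (weakTourn n).card := by
    refine Finset.card_le_mul_card_image_of_maps_to (f := deleteZero)
      (fun S hS => by simpa [weakTourn] using (Finset.mem_filter.1 hS).2) _ fun T hT => ?_
    have hT : ¬ IsStrongTourn T := by simpa [weakTourn] using hT
    obtain ⟨a, ha⟩ := T.exists_reaches_all
    obtain ⟨b, hb⟩ := T.exists_reached_by_all
    have hab : a ≠ b := by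
      rintro rfl
      exact hT fun u v => (hb u).trans (ha v)
    have hX := four_mul_card_filter_not_and_le hab
    refine (card_filter_deleteZero_eq_le _ T
      (Finset.univ.filter fun x : Fin n → Prop => ¬ (x a ∧ ¬ x b)) ?_).trans (by omega)
    rintro S hS rfl
    have hS : ¬ IsStrongTourn S := by simpa [weakTourn] using (Finset.mem_filter.1 hS).1
    refine Finset.mem_filter.2 ⟨Finset.mem_univ _, fun h => hS ?_⟩
    exact isStrongTourn_of_deleteZero ha hb h.1 ((S.iff_not_swap (Fin.succ_ne_zero b)).2 h.2)
  have hstrong : ((weakTourn (n + 1)).filter fun S => ¬ ¬ IsStrongTourn S.deleteZero).card ≤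
      2 * 2 ^ n.choose 2 := by
    refine (Finset.card_le_mul_card_image_of_maps_to (f := deleteZero) (t := Finset.univ)
      (fun _ _ => Finset.mem_univ _) 2 fun T _ => ?_).trans
        (Nat.mul_le_mul_left _ (card_orient_top_le n))
    refine (card_filter_deleteZero_eq_le _ T {fun _ => True, fun _ => False} ?_).trans
      Finset.card_le_two
    rintro S hS rfl
    obtain ⟨hS, hdel⟩ := Finset.mem_filter.1 hS
    have hS : ¬ IsStrongTourn S := by simpa [weakTourn] using hS
    have hdel : IsStrongTourn S.deleteZero := not_not.1 hdel
    rw [Finset.mem_insert, Finset.mem_singleton]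
    by_contra! hne
    obtain ⟨b, hb⟩ : ∃ b : Fin n, ¬ S.1 0 b.succ := by
      by_contra! h
      exact hne.1 (funext fun i => by simp [h i])
    obtain ⟨a, ha⟩ : ∃ a : Fin n, S.1 0 a.succ := by
      by_contra! h
      exact hne.2 (funext fun i => by simp [h i])
    exact hS (isStrongTourn_of_deleteZero (hdel a) (fun v => hdel v b) ha
      ((S.iff_not_swap (Fin.succ_ne_zero b)).2 hb))
  have hsum := Finset.card_filter_add_card_filter_not (s := weakTourn (n + 1))
    (fun S => ¬ IsStrongTourn S.deleteZero)
  rw [hpow, show 3 * (4 * 2 ^ (n - 2)) * (weakTourn n).card =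
    4 * (3 * 2 ^ (n - 2) * (weakTourn n).card) by ring]
  omega

/-- If a set of at most two vertices beats all vertices outside it, then one of its members
beats all other vertices. -/
theorem exists_forall_of_card_le_two {α : Type*} {R : α → α → Prop}
    (hR : ∀ u v, u ≠ v → R u v ∨ R v u) {B : Finset α} (hB : B.Nonempty) (hcard : B.card ≤ 2)
    (hout : ∀ u ∈ B, ∀ v ∉ B, R u v) : ∃ u, ∀ v, v ≠ u → R u v := by
  obtain ⟨u, hu⟩ := hB
  by_cases h : ∀ v, v ≠ u → R u v
  · exact ⟨u, h⟩
  push Not at h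
  obtain ⟨w, hwu, hw⟩ := h
  have hwB : w ∈ B := by
    by_contra hwB
    exact hw (hout u hu w hwB)
  have hpair : ({u, w} : Finset α) = B :=
    Finset.eq_of_subset_of_card_le (by simp [Finset.insert_subset_iff, hu, hwB])
      (by rwa [Finset.card_pair hwu.symm])
  refine ⟨w, fun v hv => ?_⟩
  by_cases hvu : v = u
  · subst hvu
    exact (hR w v hwu).resolve_right hw
  · exact hout w hwB v (by simp [← hpair, hv, hvu])

/-- A tournament on five vertices that is not strongly connected has a source or a sink. -/
theorem exists_source_or_sink {T : (⊤ : SimpleGraph (Fin 5)).Orient} (hT : ¬ IsStrongTourn T) :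
    ∃ u, (∀ v, v ≠ u → T.1 u v) ∨ ∀ v, v ≠ u → T.1 v u := by
  simp only [IsStrongTourn, not_forall] at hT
  obtain ⟨a, b, hab⟩ := hT
  let A : Finset (Fin 5) := Finset.univ.filter fun v => Relation.ReflTransGen T.1 a v
  have hA : ∀ u ∈ A, ∀ v ∉ A, T.1 v u := by
    intro u hu v hv
    simp only [A, Finset.mem_filter, Finset.mem_univ, true_and] at hu hv
    have huv : u ≠ v := fun h => hv (h ▸ hu)
    exact (T.total huv).resolve_left fun h => hv (hu.tail h)
  have hcard := A.card_add_card_compl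
  rw [Fintype.card_fin] at hcard
  rcases (by omega : A.card ≤ 2 ∨ Aᶜ.card ≤ 2) with h | h
  · obtain ⟨u, hu⟩ := exists_forall_of_card_le_two (R := fun u v => T.1 v u)
      (fun u v huv => (T.total huv).symm) ⟨a, by simp [A, Relation.ReflTransGen.refl]⟩ h hA
    exact ⟨u, .inr hu⟩
  · obtain ⟨u, hu⟩ := exists_forall_of_card_le_two (R := T.1)
      (fun u v huv => T.total huv) ⟨b, by simpa [A] using hab⟩ h
      (fun u hu v hv => hA v (by simpa using hv) u (by simpa using hu))
    exact ⟨u, .inl hu⟩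

/-- The beating relation of the tournament on five vertices whose edges `i < j`, listed
lexicographically, point upwards exactly when the corresponding entry is `true`. -/
def fiveBeats (t : Bool × Bool × Bool × Bool × Bool × Bool × Bool × Bool × Bool × Bool)
    (u v : Fin 5) : Bool :=
  let (a, b, c, d, e, f, g, h, i, j) := t
  (![![false, a, b, c, d], ![!a, false, e, f, g], ![!b, !e, false, h, i],
    ![!c, !f, !h, false, j], ![!d, !g, !i, !j, false]] : Fin 5 → Fin 5 → Bool) u v

/-- Whether the tournament encoded by `t` as in `fiveBeats` has a source or a sink. -/
def fiveSourceOrSink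
    (t : Bool × Bool × Bool × Bool × Bool × Bool × Bool × Bool × Bool × Bool) : Bool :=
  let (a, b, c, d, e, f, g, h, i, j) := t
  (a && b && c && d) || (!a && e && f && g) || (!b && !e && h && i) || (!c && !f && !h && j) ||
    (!d && !g && !i && !j) || (!a && !b && !c && !d) || (a && !e && !f && !g) ||
    (b && e && !h && !i) || (c && f && h && !j) || (d && g && i && j)

theorem fiveSourceOrSink_of_exists
    {t : Bool × Bool × Bool × Bool × Bool × Bool × Bool × Bool × Bool × Bool}
    (ht : ∃ u, (∀ v, v ≠ u → fiveBeats t u v = true) ∨ ∀ v, v ≠ u → fiveBeats t v u = true) :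
    fiveSourceOrSink t = true := by
  obtain ⟨a, b, c, d, e, f, g, h, i, j⟩ := t
  obtain ⟨u, hu | hu⟩ := ht <;> fin_cases u <;>
    simp [Fin.forall_fin_succ, fiveBeats] at hu <;> simp [fiveSourceOrSink, hu]

theorem card_fiveSourceOrSink_lt :
    (Finset.univ.filter fun t => fiveSourceOrSink t = true).card < 512 := by
  decide +kernel

/-- Every tournament on five vertices is described by `fiveBeats`. -/
theorem exists_fiveBeats (T : (⊤ : SimpleGraph (Fin 5)).Orient) :
    ∃ t, ∀ u v, T.1 u v ↔ fiveBeats t u v = true := by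
  refine ⟨(decide (T.1 0 1), decide (T.1 0 2), decide (T.1 0 3), decide (T.1 0 4),
    decide (T.1 1 2), decide (T.1 1 3), decide (T.1 1 4), decide (T.1 2 3),
    decide (T.1 2 4), decide (T.1 3 4)), fun u v => ?_⟩
  have hloop := T.not_loop u
  have hswap := fun h => T.iff_not_swap (u := u) (v := v) h
  fin_cases u <;> fin_cases v <;> simp_all [fiveBeats]

theorem card_weakTourn_five_lt : (weakTourn 5).card < 512 := by
  choose f hf using exists_fiveBeats
  refine lt_of_le_of_lt (Finset.card_le_card_of_injOn f ?_ ?_) card_fiveSourceOrSink_lt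
  · intro T hT
    have hT : ¬ IsStrongTourn T := by simpa [weakTourn] using hT
    have hex := exists_source_or_sink hT
    simp only [hf] at hex
    simpa using fiveSourceOrSink_of_exists hex
  · intro S _ T _ h
    apply Subtype.ext
    funext u v
    exact propext (by rw [hf, hf, h])

/-- Fewer than half of the tournaments on `n ≥ 5` vertices are not strongly connected. -/
theorem two_mul_card_weakTourn_lt {n : ℕ} (hn : 5 ≤ n) :
    2 * (weakTourn n).card < 2 ^ n.choose 2 := by
  induction n, hn using Nat.le_induction with
  | base =>
    have := card_weakTourn_five_lt
    rw [show Nat.choose 5 2 = 10 by decide]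
    omega
  | succ n hn ih =>
    have hstep := four_mul_card_weakTourn_succ_le n (by omega)
    rw [Nat.choose_succ_succ' n 1, Nat.choose_one_right, pow_add]
    have hpow : 2 ^ 5 ≤ 2 ^ n := Nat.pow_le_pow_right (by norm_num) hn
    have hpos : 0 < 2 ^ n.choose 2 := by positivity
    nlinarith

/-- The Turán graph with `k - 1` parts on `k` vertices misses at most one edge. -/
theorem choose_two_le_turanNum_succ (k : ℕ) (hk : 2 ≤ k) :
    k.choose 2 ≤ turanNum (k - 1) k + 1 := by
  obtain ⟨m, rfl⟩ := Nat.exists_eq_add_of_le' hk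
  have hsub : (⊤ : SimpleGraph (Fin (m + 2))).edgeFinset ⊆
      insert s(0, Fin.last (m + 1)) (SimpleGraph.turanGraph (m + 2) (m + 1)).edgeFinset := by
    intro e
    induction e with
    | h u v =>
      intro he
      have huv : u ≠ v := by simpa using he
      rw [Finset.mem_insert, SimpleGraph.mem_edgeFinset, SimpleGraph.mem_edgeSet,
        SimpleGraph.turanGraph_adj, Sym2.eq_iff]
      by_contra! h
      obtain ⟨⟨h₁, h₂⟩, h⟩ := h
      simp only [ne_eq, Fin.ext_iff, Fin.val_zero, Fin.val_last] at huv h₁ h₂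
      have hu := u.isLt
      have hv := v.isLt
      rcases (by omega : u.1 < m + 1 ∨ u.1 = m + 1) with hu' | hu' <;>
        rcases (by omega : v.1 < m + 1 ∨ v.1 = m + 1) with hv' | hv'
      · rw [Nat.mod_eq_of_lt hu', Nat.mod_eq_of_lt hv'] at h
        exact huv h
      · rw [Nat.mod_eq_of_lt hu', hv', Nat.mod_self] at h
        exact h₁ h hv'
      · rw [Nat.mod_eq_of_lt hv', hu', Nat.mod_self] at h
        exact h₂ hu' h.symm
      · omega
  have hcard := (Finset.card_le_card hsub).trans (Finset.card_insert_le _ _)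
  rw [SimpleGraph.card_edgeFinset_top_eq_card_choose_two, Fintype.card_fin] at hcard
  simpa [turanNum] using hcard

/-- For `k ≥ 5`, the number of `𝓢_k`-free orientations of `K_k` is less than
`2 ^ t_{k-1}(k)`. -/
theorem numOrient_complete_k_lt (k : ℕ) (hk : 5 ≤ k) :
    numOrient (⊤ : SimpleGraph (Fin k)) (SFam k) < 2 ^ turanNum (k - 1) k := by
  have hle := numOrient_top_le_card_weakTourn k
  have hlt := two_mul_card_weakTourn_lt hk
  have hpow : 2 ^ k.choose 2 ≤ 2 ^ (turanNum (k - 1) k + 1) :=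
    Nat.pow_le_pow_right (by norm_num) (choose_two_le_turanNum_succ k (by omega))
  rw [pow_succ] at hpow
  omega
end
end

section
/- Let n and k be positive integers with n > k ≥ 4. Then t_{k−1}(k) + (log₂ 3 + k − 3)(n − k) + t_{k−1}(n − k) < t_{k−1}(n). -/
open scoped Classical

noncomputable section

theorem turanNum_of_le {r n : ℕ} (h : n ≤ r) : turanNum r n = n.choose 2 := by
  have htop := SimpleGraph.card_edgeFinset_top_eq_card_choose_two (V := Fin n)
  rw [Fintype.card_fin] at htop
  rw [← htop, turanNum]
  congr!
  exact SimpleGraph.turanGraph_eq_top.2 (Or.inr h)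

theorem turanNum_add (r n : ℕ) :
    turanNum r (n + r) = turanNum r n + n * (r - 1) + r.choose 2 := by
  unfold turanNum
  convert SimpleGraph.card_edgeFinset_turanGraph_add (n := n) (r := r)

/-- Adding a vertex to the Turán graph adds all but `n / r` of the possible `n` edges. -/
theorem turanNum_succ_add_div {r : ℕ} (hr : 0 < r) (n : ℕ) :
    turanNum r (n + 1) + n / r = turanNum r n + n := by
  induction n using Nat.strong_induction_on with
  | _ n ih =>
    rcases lt_or_ge n r with h | h
    · rw [turanNum_of_le h, turanNum_of_le h.le, Nat.div_eq_of_lt h, Nat.choose_succ_succ' n 1,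
        Nat.choose_one_right, one_add_one_eq_two]
      omega
    · obtain ⟨m, rfl⟩ := Nat.exists_eq_add_of_le' h
      have hm := ih m (by omega)
      rw [show m + r + 1 = m + 1 + r by ring, turanNum_add, turanNum_add, Nat.add_div_right m hr,
        add_one_mul]
      omega

theorem Real.logb_two_three_lt : Real.logb 2 3 < 5 / 3 := by
  rw [Real.logb_lt_iff_lt_rpow one_lt_two three_pos]
  refine lt_of_pow_lt_pow_left₀ 3 (by positivity) ?_
  rw [← Real.rpow_natCast, ← Real.rpow_natCast, ← Real.rpow_mul zero_le_two]
  norm_num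

/-- For `n > k ≥ 4`:
`t_{k-1}(k) + (log₂ 3 + k - 3)(n - k) + t_{k-1}(n - k) < t_{k-1}(n)`. -/
theorem turanNum_ineq_clique (n k : ℕ) (hk : 4 ≤ k) (hn : k < n) :
    (turanNum (k - 1) k : ℝ) +
      (Real.logb 2 3 + (k : ℝ) - 3) * ((n : ℝ) - (k : ℝ)) +
      (turanNum (k - 1) (n - k) : ℝ) < (turanNum (k - 1) n : ℝ) := by
  obtain ⟨r, rfl⟩ : ∃ r, k = r + 2 := ⟨k - 2, by omega⟩
  obtain ⟨m, rfl⟩ := Nat.exists_eq_add_of_lt hn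
  have hsub : r + 2 + m + 1 - (r + 2) = m + 1 := by omega
  rw [show r + 2 - 1 = r + 1 by rfl, hsub]
  have hclique := turanNum_add (r + 1) 1
  have hturan := turanNum_add (r + 1) (m + 1 + 1)
  have hsucc := turanNum_succ_add_div (Nat.add_one_pos r) (m + 1)
  rw [turanNum_of_le (n := 1) (by omega), show 1 + (r + 1) = r + 2 by ring] at hclique
  rw [show m + 1 + 1 + (r + 1) = r + 2 + m + 1 by ring] at hturan
  have hdiv : 3 * ((m + 1) / (r + 1)) ≤ m + 1 :=
    (Nat.mul_le_mul_right _ (by omega)).trans (Nat.mul_div_le (m + 1) (r + 1))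
  have hlog : Real.logb 2 3 * (m + 1) < 5 / 3 * (m + 1) :=
    mul_lt_mul_of_pos_right Real.logb_two_three_lt (by positivity)
  simp only [Nat.add_sub_cancel, Nat.choose_eq_zero_of_lt one_lt_two] at hclique hturan
  rify at hclique hturan hsucc hdiv
  push_cast
  nlinarith
end
end
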